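/- Let ε > 0, let M ≥ 1 be an integer, and let c, c', c₀ > 0 and d_j (j ≥ 0) be constants. Suppose: N, T, K, P > 1 with N^ε < K ≤ c'·T and N^{1+ε} < PK, X = P²K²/N; V is smooth, supported in [1,2], with |V^{(j)}(x)| ≤ d_j·Δ^j for all j ≥ 0 where 1 ≤ Δ ≤ T·N^{−ε}, and total variation Var(V) ≤ 1; φ : (1/2, 5/2) → ℝ is smooth with |φ^{(j)}(x)| ≤ c' for j = 2, 3 and |φ''(x)| ≥ c₀ on (1/2, 5/2); p₁ = p₂ = p is a prime in [P, 2P]; r₁, r₂ are integers with |r_i − γ·p| ≤ c·PT/N for i = 1, 2; γ is real; U : ℝ → ℝ is a fixed smooth function supported in [1,2]. Then there are C and T₀, depending only on ε, M, c, c', c₀, U and the d_j, such that for T ≥ T₀: |ℒ(0)| ≤ C/T, and moreover if r₁ ≠ r₂ then |ℒ(0)| ≤ C·P·N^ε/(K·N·|r₁ − r₂|); that is, |ℒ(0)| ≤ C·min{1/T, P·N^ε/(K·N·|r₁ − r₂|)} when r₁ ≠ r₂. -/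

import Mathlib

/-- `e(t) = exp(2πit)`. -/
noncomputable def e (t : ℝ) : ℂ := Complex.exp (2 * (Real.pi : ℂ) * Complex.I * t)

/-- The oscillatory integral
`𝒥(y,r,p) = ∫_0^∞ V(x) e(Tφ(x) + γNx + 2√(Nxy)/(√M p) − rNx/p) dx`. -/
noncomputable def Jcal (V : ℝ → ℂ) (φ : ℝ → ℝ) (M : ℕ) (N T γ : ℝ) (p : ℕ) (r : ℤ)
    (y : ℝ) : ℂ :=
  ∫ x in Set.Ioi (0 : ℝ),
    V x * e (T * φ x + γ * N * x + 2 * Real.sqrt (N * x * y) / (Real.sqrt M * p)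
      - r * N * x / p)

/-- The integral `ℒ(x) = ∫_0^∞ U(y) 𝒥(MXy,r₁,p₁) conj(𝒥(MXy,r₂,p₂)) e(−xy) dy`. -/
noncomputable def Lcal (U : ℝ → ℝ) (V : ℝ → ℂ) (φ : ℝ → ℝ) (M : ℕ) (N T γ X : ℝ)
    (p₁ p₂ : ℕ) (r₁ r₂ : ℤ) (x : ℝ) : ℂ :=
  ∫ y in Set.Ioi (0 : ℝ),
    (U y : ℂ) * Jcal V φ M N T γ p₁ r₁ ((M : ℝ) * X * y) *
      (starRingEnd ℂ) (Jcal V φ M N T γ p₂ r₂ ((M : ℝ) * X * y)) * e (-(x * y))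

section Aux
open MeasureTheory Set


lemma e_add (s t : ℝ) : e (s + t) = e s * e t := by
  unfold e; rw [← Complex.exp_add]; congr 1; push_cast; ring

lemma e_zero : e 0 = 1 := by simp [e]

lemma norm_e (t : ℝ) : ‖e t‖ = 1 := by
  unfold e
  rw [show 2 * (Real.pi : ℂ) * Complex.I * t = ((2 * Real.pi * t : ℝ) : ℂ) * Complex.I by
    push_cast; ring]
  exact Complex.norm_exp_ofReal_mul_I _

lemma conj_e (t : ℝ) : (starRingEnd ℂ) (e t) = e (-t) := by
  unfold e
  rw [← Complex.exp_conj]; congr 1; simp [map_ofNat]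

lemma continuous_e : Continuous e := by unfold e; fun_prop

lemma hasDerivAt_e {f : ℝ → ℝ} {f' x : ℝ} (h : HasDerivAt f f' x) :
    HasDerivAt (fun x => e (f x)) (2 * (Real.pi : ℂ) * Complex.I * (f' * e (f x))) x := by
  unfold e
  have := ((h.ofReal_comp).const_mul (2 * (Real.pi : ℂ) * Complex.I)).cexp
  convert this using 1; ring

structure Amp (A A' : ℝ → ℂ) (D : ℝ) : Prop where
  cont : Continuous A
  cont' : Continuous A'
  der : ∀ x ∈ Icc (1 : ℝ) 2, HasDerivAt A (A' x) x
  h1 : A 1 = 0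
  h2 : A 2 = 0
  bd : ∀ x ∈ Icc (1 : ℝ) 2, ‖A x‖ ≤ D
  var : (∫ x in (1 : ℝ)..2, ‖A' x‖) ≤ D

lemma Amp.nonneg {A A' D} (h : Amp A A' D) : 0 ≤ D :=
  (norm_nonneg _).trans (h.bd 1 (by norm_num))

lemma int_mono12 {f g : ℝ → ℝ} (hf : Continuous f) (hg : Continuous g)
    (h : ∀ x ∈ Icc (1 : ℝ) 2, f x ≤ g x) :
    (∫ x in (1 : ℝ)..2, f x) ≤ ∫ x in (1 : ℝ)..2, g x :=
  intervalIntegral.integral_mono_on (by norm_num) (hf.intervalIntegrable _ _)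
    (hg.intervalIntegrable _ _) h

lemma norm_int12 (f : ℝ → ℂ) : ‖∫ x in (1 : ℝ)..2, f x‖ ≤ ∫ x in (1 : ℝ)..2, ‖f x‖ :=
  intervalIntegral.norm_integral_le_integral_norm (by norm_num)

lemma Amp.mul_real {A A' D} (h : Amp A A' D) {m m' : ℝ → ℝ} {M : ℝ} (hm : Continuous m)
    (hm' : Continuous m') (hd : ∀ x ∈ Icc (1 : ℝ) 2, HasDerivAt m (m' x) x)
    (hb : ∀ x ∈ Icc (1 : ℝ) 2, |m x| ≤ M) (hv : (∫ x in (1 : ℝ)..2, |m' x|) ≤ M) :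
    Amp (fun x => (m x : ℂ) * A x) (fun x => (m' x : ℂ) * A x + m x * A' x) (2 * M * D) := by
  have hM : 0 ≤ M := (abs_nonneg _).trans (hb 1 (by norm_num))
  have hD := h.nonneg
  have c1 := h.cont
  have c2 := h.cont'
  refine ⟨by fun_prop, by fun_prop, fun x hx => ?_, by simp [h.h1], by simp [h.h2], fun x hx => ?_, ?_⟩
  · exact (hd x hx).ofReal_comp.mul (h.der x hx)
  · rw [norm_mul, Complex.norm_real, Real.norm_eq_abs]
    have := mul_le_mul (hb x hx) (h.bd x hx) (norm_nonneg _) hM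
    nlinarith [mul_nonneg hM hD]
  · calc (∫ x in (1 : ℝ)..2, ‖(m' x : ℂ) * A x + m x * A' x‖)
        ≤ ∫ x in (1 : ℝ)..2, (|m' x| * D + M * ‖A' x‖) := by
          apply int_mono12 (by fun_prop) (by fun_prop)
          intro x hx
          refine (norm_add_le _ _).trans ?_
          rw [norm_mul, norm_mul, Complex.norm_real, Complex.norm_real, Real.norm_eq_abs,
            Real.norm_eq_abs]
          gcongr
          · exact h.bd x hx
          · exact hb x hx
      _ = (∫ x in (1 : ℝ)..2, |m' x|) * D + M * ∫ x in (1 : ℝ)..2, ‖A' x‖ := by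
          rw [intervalIntegral.integral_add, intervalIntegral.integral_mul_const,
            intervalIntegral.integral_const_mul]
          · exact (by fun_prop : Continuous _).intervalIntegrable _ _
          · exact (by fun_prop : Continuous _).intervalIntegrable _ _
      _ ≤ M * D + M * D := by
          gcongr
          exact h.var
      _ = 2 * M * D := by ring

/-- second derivative test -/
lemma vdc_pos {A A' : ℝ → ℂ} {D : ℝ} (h : Amp A A' D) {F F' F'' : ℝ → ℝ} {l : ℝ} (hl : 0 < l)
    (cF : Continuous F) (cF' : Continuous F') (cF'' : Continuous F'')
    (d1 : ∀ x ∈ Icc (1 : ℝ) 2, HasDerivAt F (F' x) x)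
    (d2 : ∀ x ∈ Icc (1 : ℝ) 2, HasDerivAt F' (F'' x) x)
    (hF : ∀ x ∈ Icc (1 : ℝ) 2, l ≤ F'' x) :
    ‖∫ x in (1 : ℝ)..2, A x * e (F x)‖ ≤ 10 * D / √l := by
  have hD := h.nonneg
  have cA := h.cont
  have cA' := h.cont'
  have ce := continuous_e
  have hs : 0 < √l := Real.sqrt_pos.2 hl
  have hss : √l ^ 2 = l := Real.sq_sqrt hl.le
  have hR : ∀ x, 0 < F' x ^ 2 + l := fun x => by positivity
  have hR0 : ∀ x, F' x ^ 2 + l ≠ 0 := fun x => (hR x).ne'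
  have hu : uIcc (1 : ℝ) 2 = Icc 1 2 := uIcc_of_le (by norm_num)
  -- arctan bound
  have hat : (∫ x in (1 : ℝ)..2, F'' x / (F' x ^ 2 + l)) ≤ Real.pi / √l := by
    rw [intervalIntegral.integral_eq_sub_of_hasDerivAt
      (f := fun x => Real.arctan (F' x / √l) / √l)]
    · have h1 := Real.arctan_lt_pi_div_two (F' 2 / √l)
      have h2 := Real.neg_pi_div_two_lt_arctan (F' 1 / √l)
      rw [← sub_div]
      gcongr
      linarith
    · intro x hx
      rw [hu] at hx
      refine ((((d2 x hx).div_const √l).arctan).div_const √l).congr_deriv ?_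
      nth_rewrite 4 [← hss]
      field_simp
      try ring
    · exact (Continuous.intervalIntegrable (by fun_prop (disch := exact hR0 _)) _ _)
  have cq : Continuous fun x => F' x / (F' x ^ 2 + l) := by fun_prop (disch := exact hR0 _)
  have cq' : Continuous fun x => F'' x * (l - F' x ^ 2) / (F' x ^ 2 + l) ^ 2 := by
    have : ∀ x, (F' x ^ 2 + l) ^ 2 ≠ 0 := fun x => pow_ne_zero _ (hR0 x)
    fun_prop (disch := exact this _)
  have cR : Continuous fun x => l / (F' x ^ 2 + l) := by fun_prop (disch := exact hR0 _)
  have cR'' : Continuous fun x => F'' x / (F' x ^ 2 + l) := by fun_prop (disch := exact hR0 _)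
  have ibp := intervalIntegral.integral_deriv_mul_eq_sub (a := 1) (b := 2)
    (u := fun x => ((F' x / (F' x ^ 2 + l) : ℝ) : ℂ) * A x)
    (u' := fun x => ((F'' x * (l - F' x ^ 2) / (F' x ^ 2 + l) ^ 2 : ℝ) : ℂ) * A x
      + ((F' x / (F' x ^ 2 + l) : ℝ) : ℂ) * A' x)
    (v := fun x => e (F x)) (v' := fun x => 2 * (Real.pi : ℂ) * Complex.I * (F' x * e (F x)))
    (by
      intro x hx
      rw [hu] at hx
      refine HasDerivAt.mul (HasDerivAt.ofReal_comp ?_) (h.der x hx)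
      refine ((d2 x hx).div (((d2 x hx).pow 2).add_const l) (hR0 x)).congr_deriv ?_
      push_cast; simp only [Pi.pow_apply]; ring)
    (by intro x hx; rw [hu] at hx; exact hasDerivAt_e (d1 x hx))
    (Continuous.intervalIntegrable (by fun_prop) _ _)
    (Continuous.intervalIntegrable (by fun_prop) _ _)
  simp only [h.h1, h.h2, mul_zero, zero_mul, sub_zero] at ibp
  rw [intervalIntegral.integral_add (Continuous.intervalIntegrable (by fun_prop) _ _)
    (Continuous.intervalIntegrable (by fun_prop) _ _)] at ibp
  set I1 := ∫ x in (1 : ℝ)..2, (((F'' x * (l - F' x ^ 2) / (F' x ^ 2 + l) ^ 2 : ℝ) : ℂ) * A x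
      + ((F' x / (F' x ^ 2 + l) : ℝ) : ℂ) * A' x) * e (F x) with hI1
  set I2 := ∫ x in (1 : ℝ)..2, ((F' x / (F' x ^ 2 + l) : ℝ) : ℂ) * A x *
    (2 * (Real.pi : ℂ) * Complex.I * (F' x * e (F x))) with hI2
  have split : (∫ x in (1 : ℝ)..2, A x * e (F x)) =
      (∫ x in (1 : ℝ)..2, ((l / (F' x ^ 2 + l) : ℝ) : ℂ) * A x * e (F x))
        + (2 * (Real.pi : ℂ) * Complex.I)⁻¹ * I2 := by
    rw [hI2, ← intervalIntegral.integral_const_mul, ← intervalIntegral.integral_add]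
    · apply intervalIntegral.integral_congr
      intro x _
      have : ((F' x ^ 2 + l : ℝ) : ℂ) ≠ 0 := by exact_mod_cast hR0 x
      have hp : (Real.pi : ℂ) ≠ 0 := by exact_mod_cast Real.pi_ne_zero
      push_cast at this ⊢
      field_simp
      ring
    · exact Continuous.intervalIntegrable (by fun_prop) _ _
    · exact Continuous.intervalIntegrable (by fun_prop) _ _
  have b0 : ‖∫ x in (1 : ℝ)..2, ((l / (F' x ^ 2 + l) : ℝ) : ℂ) * A x * e (F x)‖
      ≤ D * (Real.pi / √l) := by
    refine (norm_int12 _).trans ?_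
    calc _ ≤ ∫ x in (1 : ℝ)..2, D * (F'' x / (F' x ^ 2 + l)) := by
          apply int_mono12 (by fun_prop) (by fun_prop)
          intro x hx
          rw [norm_mul, norm_mul, norm_e, mul_one, Complex.norm_real, Real.norm_eq_abs,
            abs_of_pos (div_pos hl (hR x)), mul_comm]
          have := hF x hx
          have := hR x
          gcongr
          exact h.bd x hx
      _ = D * ∫ x in (1 : ℝ)..2, (F'' x / (F' x ^ 2 + l)) := by
          rw [intervalIntegral.integral_const_mul]
      _ ≤ _ := by gcongr
  have b1 : ‖I1‖ ≤ D * (Real.pi / √l) + 1 / √l * D := by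
    refine (norm_int12 _).trans ?_
    calc _ ≤ ∫ x in (1 : ℝ)..2, (D * (F'' x / (F' x ^ 2 + l)) + 1 / √l * ‖A' x‖) := by
          apply int_mono12 (by fun_prop) (by fun_prop)
          intro x hx
          rw [norm_mul, norm_e, mul_one]
          refine (norm_add_le _ _).trans ?_
          rw [norm_mul, norm_mul, Complex.norm_real, Complex.norm_real, Real.norm_eq_abs,
            Real.norm_eq_abs, mul_comm D]
          have h0 := hF x hx
          have hx0 := hR x
          gcongr
          · exact div_nonneg (hl.le.trans h0) hx0.le
          · rw [abs_div, abs_mul, abs_of_nonneg (hl.le.trans h0), abs_of_pos (by positivity : 0 < (F' x ^ 2 + l)^2), div_le_div_iff₀ (by positivity) hx0]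
            have : |l - F' x ^ 2| ≤ F' x ^ 2 + l := by
              rw [abs_le]; constructor <;> nlinarith [sq_nonneg (F' x)]
            have h00 := hl.le.trans h0
            have := mul_le_mul_of_nonneg_left this (mul_nonneg h00 hx0.le)
            nlinarith
          · exact h.bd x hx
          · rw [abs_div, abs_of_pos hx0, div_le_div_iff₀ hx0 hs]
            have := sq_nonneg (|F' x| - √l)
            have h3 := sq_abs (F' x)
            nlinarith [mul_nonneg (abs_nonneg (F' x)) hs.le]
      _ = D * (∫ x in (1 : ℝ)..2, (F'' x / (F' x ^ 2 + l))) + 1 / √l * ∫ x in (1 : ℝ)..2, ‖A' x‖ := by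
          rw [intervalIntegral.integral_add, intervalIntegral.integral_const_mul,
            intervalIntegral.integral_const_mul]
          · exact Continuous.intervalIntegrable (by fun_prop) _ _
          · exact Continuous.intervalIntegrable (by fun_prop) _ _
      _ ≤ _ := by
          gcongr
          exact h.var
  have b2 : ‖(2 * (Real.pi : ℂ) * Complex.I)⁻¹ * I2‖ ≤ ‖I1‖ := by
    have : I2 = -I1 := by linear_combination ibp
    rw [this, norm_mul, norm_neg, norm_inv]
    have h2 : ‖2 * (Real.pi : ℂ) * Complex.I‖ = 2 * Real.pi := by
      simp [Real.pi_pos.le]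
    rw [h2]
    have : (2 * Real.pi)⁻¹ ≤ 1 := inv_le_one_of_one_le₀ (by linarith [Real.pi_gt_three])
    exact mul_le_of_le_one_left (norm_nonneg _) this
  rw [split]
  refine (norm_add_le _ _).trans ((add_le_add b0 (b2.trans b1)).trans ?_)
  rw [show D * (Real.pi / √l) + (D * (Real.pi / √l) + 1 / √l * D) = (2 * Real.pi + 1) * D / √l by ring]
  gcongr
  linarith [Real.pi_lt_four]

lemma vdc {A A' : ℝ → ℂ} {D : ℝ} (h : Amp A A' D) {F F' F'' : ℝ → ℝ} {l : ℝ} (hl : 0 < l)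
    (cF : Continuous F) (cF' : Continuous F') (cF'' : Continuous F'')
    (d1 : ∀ x ∈ Icc (1 : ℝ) 2, HasDerivAt F (F' x) x)
    (d2 : ∀ x ∈ Icc (1 : ℝ) 2, HasDerivAt F' (F'' x) x)
    (hF : (∀ x ∈ Icc (1 : ℝ) 2, l ≤ F'' x) ∨ (∀ x ∈ Icc (1 : ℝ) 2, F'' x ≤ -l)) :
    ‖∫ x in (1 : ℝ)..2, A x * e (F x)‖ ≤ 10 * D / √l := by
  rcases hF with hF | hF
  · exact vdc_pos h hl cF cF' cF'' d1 d2 hF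
  · have hc : Amp (fun x => (starRingEnd ℂ) (A x)) (fun x => (starRingEnd ℂ) (A' x)) D := by
      have c1 := h.cont
      have c2 := h.cont'
      refine ⟨Complex.continuous_conj.comp c1, Complex.continuous_conj.comp c2, fun x hx => ?_,
        by simp [h.h1], by simp [h.h2], fun x hx => ?_, ?_⟩
      · exact (h.der x hx).star
      · rw [RCLike.norm_conj]; exact h.bd x hx
      · simp only [RCLike.norm_conj]; exact h.var
    have := vdc_pos hc hl cF.neg cF'.neg cF''.neg (fun x hx => (d1 x hx).neg)
      (fun x hx => (d2 x hx).neg) (fun x hx => by have := hF x hx; simp; linarith)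
    rw [← RCLike.norm_conj, ← intervalIntegral.intervalIntegral_conj]
    simpa [conj_e] using this


/-- the kernel -/
noncomputable def Kk (u : ℝ → ℝ) (t : ℝ) : ℂ := ∫ w in (1 : ℝ)..2, (u w : ℂ) * e (w * t)

structure Good (u : ℝ → ℝ) : Prop where
  smooth : ContDiff ℝ (⊤ : ℕ∞) u
  supp : Function.support u ⊆ Icc 1 2

lemma zero_of_supp {E : Type*} [NormedAddCommGroup E] {f : ℝ → E} (hc : Continuous f)
    (hs : Function.support f ⊆ Icc 1 2) {x : ℝ} (hx : x ≤ 1 ∨ 2 ≤ x) : f x = 0 := by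
  have hz : ∀ y, y < 1 ∨ 2 < y → f y = 0 := by
    intro y hy
    by_contra h
    have := hs h
    rcases hy with hy | hy
    · linarith [this.1]
    · linarith [this.2]
  have hcl : IsClosed {y | f y = 0} := isClosed_eq hc continuous_const
  rcases hx with hx | hx
  · have : Iio (1 : ℝ) ⊆ {y | f y = 0} := fun y hy => hz y (Or.inl hy)
    have h2 := hcl.closure_subset_iff.2 this
    rw [closure_Iio] at h2
    exact h2 hx
  · have : Ioi (2 : ℝ) ⊆ {y | f y = 0} := fun y hy => hz y (Or.inr hy)
    have h2 := hcl.closure_subset_iff.2 this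
    rw [closure_Ioi] at h2
    exact h2 hx

lemma Good.deriv {u} (h : Good u) : Good (deriv u) := by
  refine ⟨(contDiff_infty_iff_deriv.1 h.smooth).2, ?_⟩
  have h1 := support_deriv_subset (𝕜 := ℝ) (f := u)
  refine h1.trans ?_
  exact closure_minimal h.supp isClosed_Icc

lemma Good.mulid {u} (h : Good u) : Good (fun w => w * u w) := by
  refine ⟨contDiff_id.mul h.smooth, ?_⟩
  refine (Function.support_mul_subset_right _ _).trans h.supp

lemma Good.cont {u} (h : Good u) : Continuous u := h.smooth.continuous

lemma Good.decay {u} (h : Good u) : ∃ C : ℝ, 0 < C ∧ ∀ t, ‖Kk u t‖ ≤ C / (1 + t ^ 2) ^ 2 := by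
  have hcs : HasCompactSupport (fun w => (u w : ℂ)) := by
    apply HasCompactSupport.intro (isCompact_Icc (a := (1 : ℝ)) (b := 2))
    intro x hx
    have : u x = 0 := by
      by_contra h0
      exact hx (h.supp h0)
    simp [this]
  have hsm : ContDiff ℝ (⊤ : ℕ∞) (fun w => (u w : ℂ)) :=
    Complex.ofRealCLM.contDiff.comp h.smooth
  let f := hcs.toSchwartzMap hsm
  let g : SchwartzMap ℝ ℂ := FourierTransform.fourier f
  have hg : ∀ t, Kk u t = g (-t) := by
    intro t
    have : g (-t) = FourierTransform.fourier (fun w => (u w : ℂ)) (-t) := by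
      simp only [g, SchwartzMap.fourier_coe]; rfl
    rw [this, Real.fourier_real_eq_integral_exp_smul, Kk,
      intervalIntegral.integral_of_le (by norm_num), ← integral_Icc_eq_integral_Ioc,
      setIntegral_eq_integral_of_forall_compl_eq_zero]
    · congr 1
      ext w
      rw [smul_eq_mul, mul_comm, e]
      congr 2
      push_cast; ring
    · intro w hw
      have : u w = 0 := by
        by_contra h0
        exact hw (h.supp h0)
      simp [this]
  obtain ⟨C0, hC0, h0⟩ := g.decay 0 0
  obtain ⟨C4, hC4, h4⟩ := g.decay 4 0
  refine ⟨2 * (C0 + C4), by positivity, fun t => ?_⟩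
  rw [hg, le_div_iff₀ (by positivity)]
  have a0 := h0 (-t)
  have a4 := h4 (-t)
  simp only [pow_zero, one_mul, norm_iteratedFDeriv_zero, norm_neg, Real.norm_eq_abs] at a0 a4
  rw [show |t| ^ 4 = t ^ 4 by rw [show (4 : ℕ) = 2 * 2 by rfl, pow_mul, sq_abs, ← pow_mul]] at a4
  have : (1 + t ^ 2) ^ 2 ≤ 2 * (1 + t ^ 4) := by nlinarith [sq_nonneg (t ^ 2 - 1)]
  calc _ ≤ ‖g (-t)‖ * (2 * (1 + t ^ 4)) := by gcongr
    _ = 2 * (‖g (-t)‖ + t ^ 4 * ‖g (-t)‖) := by ring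
    _ ≤ _ := by linarith

lemma Kk_cont {u} (hu : Continuous u) : Continuous (Kk u) := by
  unfold Kk
  have := continuous_e
  apply intervalIntegral.continuous_parametric_intervalIntegral_of_continuous'
  unfold Function.uncurry
  fun_prop

lemma Kk_deriv {u} (h : Good u) (t : ℝ) :
    Kk (deriv u) t = -(2 * (Real.pi : ℂ) * Complex.I * t) * Kk u t := by
  have c := h.cont
  have c' := h.deriv.cont
  have ce := continuous_e
  have ibp := intervalIntegral.integral_deriv_mul_eq_sub (a := 1) (b := 2)
    (u := fun w => (u w : ℂ)) (u' := fun w => ((deriv u w : ℝ) : ℂ)) (v := fun w => e (w * t))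
    (v' := fun w => 2 * (Real.pi : ℂ) * Complex.I * (t * e (w * t)))
    (fun x _ => (h.smooth.differentiable (by simp) x).hasDerivAt.ofReal_comp)
    (fun x _ => by
      have := hasDerivAt_e ((hasDerivAt_id x).mul_const t)
      simpa using this)
    (Continuous.intervalIntegrable (by fun_prop) _ _)
    (Continuous.intervalIntegrable (by fun_prop) _ _)
  simp only [zero_of_supp c h.supp (Or.inl le_rfl), zero_of_supp c h.supp (Or.inr le_rfl),
    Complex.ofReal_zero, zero_mul, sub_zero] at ibp
  rw [intervalIntegral.integral_add (Continuous.intervalIntegrable (by fun_prop) _ _)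
    (Continuous.intervalIntegrable (by fun_prop) _ _)] at ibp
  unfold Kk
  rw [← intervalIntegral.integral_const_mul]
  rw [eq_neg_of_add_eq_zero_left ibp, ← intervalIntegral.integral_neg]
  congr 1; ext w; ring

noncomputable def Jf (B : ℝ) (S : ℝ → ℝ) (P : ℝ → ℂ) (w : ℝ) : ℂ :=
  ∫ x in (1 : ℝ)..2, P x * e (2 * B * w * S x)

noncomputable def Qf (B : ℝ) (S : ℝ → ℝ) (u : ℝ → ℝ) (P₁ P₂ : ℝ → ℂ) : ℂ :=
  ∫ w in (1 : ℝ)..2, (u w : ℂ) * (Jf B S P₁ w * (starRingEnd ℂ) (Jf B S P₂ w))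

noncomputable def Q2 (B : ℝ) (S : ℝ → ℝ) (u : ℝ → ℝ) (W : ℝ → ℝ → ℝ) (P₁ P₂ : ℝ → ℂ) : ℂ :=
  ∫ x in (1 : ℝ)..2, ∫ y in (1 : ℝ)..2, (W x y : ℂ) * (P₁ x * (starRingEnd ℂ) (P₂ y)) *
    Kk u (2 * B * (S x - S y))

lemma swap12 {F : ℝ → ℝ → ℂ} (h : Continuous F.uncurry) :
    (∫ x in (1 : ℝ)..2, ∫ y in (1 : ℝ)..2, F x y) = ∫ y in (1 : ℝ)..2, ∫ x in (1 : ℝ)..2, F x y := by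
  apply intervalIntegral_intervalIntegral_swap
  have : IntegrableOn F.uncurry (Icc (1 : ℝ) 2 ×ˢ Icc (1 : ℝ) 2) :=
    h.continuousOn.integrableOn_compact (isCompact_Icc.prod isCompact_Icc)
  apply this.mono_set
  rw [uIoc_of_le (by norm_num)]
  exact prod_mono Ioc_subset_Icc_self Ioc_subset_Icc_self

lemma Jf_cont {B : ℝ} {S : ℝ → ℝ} {P : ℝ → ℂ} (hS : Continuous S) (hP : Continuous P) :
    Continuous (Jf B S P) := by
  unfold Jf
  have := continuous_e
  apply intervalIntegral.continuous_parametric_intervalIntegral_of_continuous'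
  unfold Function.uncurry
  fun_prop

lemma Qf_eq {B : ℝ} {S u : ℝ → ℝ} {P₁ P₂ : ℝ → ℂ} (hS : Continuous S) (hu : Continuous u)
    (h1 : Continuous P₁) (h2 : Continuous P₂) :
    Qf B S u P₁ P₂ = Q2 B S u (fun _ _ => 1) P₁ P₂ := by
  have ce := continuous_e
  have cc := Complex.continuous_conj
  have hJ2 := Jf_cont (B := B) hS h2
  unfold Qf Q2
  have s1 : ∀ w, (u w : ℂ) * (Jf B S P₁ w * (starRingEnd ℂ) (Jf B S P₂ w)) =
      ∫ x in (1 : ℝ)..2, (u w : ℂ) * ((P₁ x * e (2 * B * w * S x)) * (starRingEnd ℂ) (Jf B S P₂ w)) := by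
    intro w
    rw [intervalIntegral.integral_const_mul, intervalIntegral.integral_mul_const]
    rfl
  simp_rw [s1]
  rw [swap12 (by unfold Function.uncurry; fun_prop)]
  congr 1; ext x
  have s2 : ∀ w, (u w : ℂ) * ((P₁ x * e (2 * B * w * S x)) * (starRingEnd ℂ) (Jf B S P₂ w)) =
      ∫ y in (1 : ℝ)..2, (u w : ℂ) * ((P₁ x * e (2 * B * w * S x)) *
        (starRingEnd ℂ) (P₂ y * e (2 * B * w * S y))) := by
    intro w
    rw [intervalIntegral.integral_const_mul, intervalIntegral.integral_const_mul,
      intervalIntegral.intervalIntegral_conj]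
    rfl
  simp_rw [s2]
  rw [swap12 (by unfold Function.uncurry; fun_prop)]
  congr 1; ext y
  unfold Kk
  rw [← intervalIntegral.integral_const_mul]
  congr 1; ext w
  rw [map_mul, conj_e, show w * (2 * B * (S x - S y)) = 2 * B * w * S x + -(2 * B * w * S y) by ring,
    e_add]
  push_cast
  ring

lemma int_kern {b : ℝ} (hb : 0 < b) (x : ℝ) :
    (∫ y in (1 : ℝ)..2, 1 / (1 + (b * (x - y)) ^ 2)) ≤ Real.pi / b := by
  have hR : ∀ y, 1 + (b * (x - y)) ^ 2 ≠ 0 := fun y => by positivity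
  rw [intervalIntegral.integral_eq_sub_of_hasDerivAt
      (f := fun y => -Real.arctan (b * (x - y)) / b)]
  · have h1 := Real.arctan_lt_pi_div_two (b * (x - 1))
    have h2 := Real.neg_pi_div_two_lt_arctan (b * (x - 2))
    rw [← sub_div]
    gcongr
    linarith
  · intro y _
    refine ((((hasDerivAt_id y).const_sub x).const_mul b).arctan.neg.div_const b).congr_deriv ?_
    simp only [id]
    have := hR y
    field_simp
  · exact (Continuous.intervalIntegrable (by fun_prop (disch := exact hR _)) _ _)

lemma Q2_bound {B k C M D : ℝ} {S u : ℝ → ℝ} {W : ℝ → ℝ → ℝ} {P₁ P₂ : ℝ → ℂ} (hB : 0 < B)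
    (hk : 0 < k) (hk1 : k ≤ 1)
    (hS : Continuous S) (hu : Continuous u) (hW : Continuous W.uncurry)
    (h1 : Continuous P₁) (h2 : Continuous P₂)
    (hSk : ∀ x y, k * |x - y| ≤ |S x - S y|)
    (hC : ∀ t, ‖Kk u t‖ ≤ C / (1 + t ^ 2) ^ 2)
    (hM : ∀ x ∈ Icc (1 : ℝ) 2, ∀ y ∈ Icc (1 : ℝ) 2, |W x y| ≤ M * (1 + (B * (x - y)) ^ 2))
    (hD : ∀ x ∈ Icc (1 : ℝ) 2, ‖P₂ x‖ ≤ D) :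
    ‖Q2 B S u W P₁ P₂‖ ≤ Real.pi / k ^ 3 * C * M * D * (∫ x in (1 : ℝ)..2, ‖P₁ x‖) / B := by
  have hKc := Kk_cont hu
  have cc := Complex.continuous_conj
  have hW' : Continuous fun p : ℝ × ℝ => W p.1 p.2 := hW
  have hD0 : 0 ≤ D := (norm_nonneg _).trans (hD 1 (by norm_num))
  have hM0 : 0 ≤ M := by
    have := (abs_nonneg _).trans (hM 1 (by norm_num) 1 (by norm_num))
    simpa using this
  have hC0 : 0 ≤ C := by
    have := (norm_nonneg _).trans (hC 0)
    simpa using this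
  have hR : ∀ x y, 1 + (k * B * (x - y)) ^ 2 ≠ 0 := fun x y => by positivity
  have cW : ∀ x, Continuous (W x) := fun x => by
    have : W x = W.uncurry ∘ fun y => (x, y) := by ext y; rfl
    rw [this]; fun_prop
  have pt : ∀ x ∈ Icc (1 : ℝ) 2, ∀ y ∈ Icc (1 : ℝ) 2,
      ‖(W x y : ℂ) * (P₁ x * (starRingEnd ℂ) (P₂ y)) * Kk u (2 * B * (S x - S y))‖ ≤
      ‖P₁ x‖ * D * (M * C / k ^ 2) * (1 / (1 + (k * B * (x - y)) ^ 2)) := by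
    intro x hx y hy
    rw [norm_mul, norm_mul, norm_mul, RCLike.norm_conj, Complex.norm_real, Real.norm_eq_abs]
    have b1 := hM x hx y hy
    have b2 := hC (2 * B * (S x - S y))
    have b3 := hD y hy
    set t := 2 * B * (S x - S y) with ht
    have ht2 : (k * B * (x - y)) ^ 2 ≤ t ^ 2 := by
      have := hSk x y
      rw [ht]
      have h3 : |k * B * (x - y)| ≤ |2 * B * (S x - S y)| := by
        rw [abs_mul, abs_mul, abs_mul, abs_mul, abs_of_pos hk, abs_of_pos hB]
        simp only [Nat.abs_ofNat]
        nlinarith [mul_le_mul_of_nonneg_left this hB.le, mul_nonneg hB.le (abs_nonneg (S x - S y))]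
      exact sq_le_sq.2 h3
    have e1 : k ^ 2 * (1 + (B * (x - y)) ^ 2) * (1 + (k * B * (x - y)) ^ 2) ≤ (1 + t ^ 2) ^ 2 := by
      have : k ^ 2 * (1 + (B * (x - y)) ^ 2) ≤ 1 + t ^ 2 := by nlinarith
      calc _ ≤ (1 + t ^ 2) * (1 + t ^ 2) := by gcongr
        _ = _ := by ring
    have e2 : |W x y| * ‖Kk u t‖ ≤ (M * C / k ^ 2) * (1 / (1 + (k * B * (x - y)) ^ 2)) := by
      calc _ ≤ (M * (1 + (B * (x - y)) ^ 2)) * (C / (1 + t ^ 2) ^ 2) := by gcongr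
        _ ≤ (M * (1 + (B * (x - y)) ^ 2)) *
            (C / (k ^ 2 * (1 + (B * (x - y)) ^ 2) * (1 + (k * B * (x - y)) ^ 2))) := by gcongr
        _ = _ := by
          have := hR x y
          have : 1 + (B * (x - y)) ^ 2 ≠ 0 := by positivity
          field_simp
    calc _ = ‖P₁ x‖ * ‖P₂ y‖ * (|W x y| * ‖Kk u t‖) := by ring
      _ ≤ ‖P₁ x‖ * D * ((M * C / k ^ 2) * (1 / (1 + (k * B * (x - y)) ^ 2))) := by gcongr
      _ = _ := by ring
  have inner : ∀ x ∈ Icc (1 : ℝ) 2,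
      ‖∫ y in (1 : ℝ)..2, (W x y : ℂ) * (P₁ x * (starRingEnd ℂ) (P₂ y)) *
        Kk u (2 * B * (S x - S y))‖ ≤ (D * (M * C / k ^ 2) * (Real.pi / (k * B))) * ‖P₁ x‖ := by
    intro x hx
    have := cW x
    refine (norm_int12 _).trans ?_
    calc _ ≤ ∫ y in (1 : ℝ)..2, ‖P₁ x‖ * D * (M * C / k ^ 2) * (1 / (1 + (k * B * (x - y)) ^ 2)) := by
          apply int_mono12 (by fun_prop)
            (continuous_const.mul (continuous_const.div (by fun_prop) (fun y => hR x y)))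
          exact pt x hx
      _ = ‖P₁ x‖ * D * (M * C / k ^ 2) * ∫ y in (1 : ℝ)..2, (1 / (1 + (k * B * (x - y)) ^ 2)) := by
          rw [intervalIntegral.integral_const_mul]
      _ ≤ ‖P₁ x‖ * D * (M * C / k ^ 2) * (Real.pi / (k * B)) := by
          gcongr
          exact int_kern (by positivity) x
      _ = _ := by ring
  unfold Q2
  refine (norm_int12 _).trans ?_
  calc _ ≤ ∫ x in (1 : ℝ)..2, (D * (M * C / k ^ 2) * (Real.pi / (k * B))) * ‖P₁ x‖ := by
        apply int_mono12 _ (by fun_prop) inner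
        apply Continuous.norm
        apply intervalIntegral.continuous_parametric_intervalIntegral_of_continuous'
        unfold Function.uncurry
        fun_prop
    _ = (D * (M * C / k ^ 2) * (Real.pi / (k * B))) * ∫ x in (1 : ℝ)..2, ‖P₁ x‖ := by
        rw [intervalIntegral.integral_const_mul]
    _ = _ := by field_simp


structure Half (z h k : ℝ → ℝ) (C : ℝ) : Prop where
  d1 : ∀ x, HasDerivAt z (h x) x
  d2 : ∀ x ∈ Icc (1 : ℝ) 2, HasDerivAt h (k x) x
  ch : Continuous h
  ck : Continuous k
  sgn : (∀ x, 1 / C ≤ h x) ∨ (∀ x, h x ≤ -(1 / C))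
  up : ∀ x, |h x| ≤ C
  lip : ∀ x y, |h x - h y| ≤ C * |x - y|
  kb : ∀ x ∈ Icc (1 : ℝ) 2, |k x| ≤ C

lemma Half.cz {z h k C} (H : Half z h k C) : Continuous z :=
  continuous_iff_continuousAt.2 fun x => (H.d1 x).continuousAt

lemma Half.mvt {z h k C} (H : Half z h k C) (x y : ℝ) :
    ∃ c, |x - c| ≤ |x - y| ∧ z x - z y = h c * (x - y) := by
  rcases lt_trichotomy x y with hxy | hxy | hxy
  · obtain ⟨c, hc, h1⟩ := exists_hasDerivAt_eq_slope z h hxy H.cz.continuousOn (fun t _ => H.d1 t)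
    refine ⟨c, ?_, ?_⟩
    · rw [abs_of_neg (by linarith [hc.1]), abs_of_neg (by linarith)]; linarith [hc.2]
    · rw [h1]; have : y - x ≠ 0 := by linarith
      field_simp; ring
  · exact ⟨x, by simp, by simp [hxy]⟩
  · obtain ⟨c, hc, h1⟩ := exists_hasDerivAt_eq_slope z h hxy H.cz.continuousOn (fun t _ => H.d1 t)
    refine ⟨c, ?_, ?_⟩
    · rw [abs_of_pos (by linarith [hc.2]), abs_of_pos (by linarith)]; linarith [hc.1]
    · rw [h1]; have : x - y ≠ 0 := by linarith
      field_simp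

lemma Half.habs {z h k C} (H : Half z h k C) (x : ℝ) : 1 / C ≤ |h x| := by
  rcases H.sgn with h1 | h1
  · exact (h1 x).trans (le_abs_self _)
  · have := h1 x
    exact (by linarith : 1 / C ≤ -h x).trans (neg_le_abs _)

lemma Half.low {z h k C} (H : Half z h k C) (x y : ℝ) : 1 / C * |x - y| ≤ |z x - z y| := by
  obtain ⟨c, _, h1⟩ := H.mvt x y
  rw [h1, abs_mul]
  gcongr
  exact H.habs c

lemma Half.upp {z h k C} (H : Half z h k C) (x y : ℝ) : |z x - z y| ≤ C * |x - y| := by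
  obtain ⟨c, _, h1⟩ := H.mvt x y
  rw [h1, abs_mul]
  gcongr
  exact H.up c

lemma Half.tay {z h k C} (hC : 0 < C) (H : Half z h k C) (x y : ℝ) :
    |z x - z y - h x * (x - y)| ≤ C * (x - y) ^ 2 := by
  obtain ⟨c, h2, h1⟩ := H.mvt x y
  rw [h1, ← sub_mul, abs_mul, ← sq_abs, pow_two, ← mul_assoc]
  gcongr
  refine (H.lip c x).trans ?_
  rw [abs_sub_comm]
  gcongr

lemma Half.surj {z h k C} (hC : 0 < C) (H : Half z h k C) (t : ℝ) : ∃ x, z x = t := by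
  have key : ∀ (f g : ℝ → ℝ), (∀ x, HasDerivAt f (g x) x) → (∀ x, 1 / C ≤ g x) → ∀ t, ∃ x, f x = t := by
    intro f g hf hg t
    have cf : Continuous f := continuous_iff_continuousAt.2 fun x => (hf x).continuousAt
    have mono : Monotone (fun x => f x - 1 / C * x) := by
      apply monotone_of_hasDerivAt_nonneg (f' := fun x => g x - 1 / C)
      · intro x
        exact ((hf x).sub ((hasDerivAt_id x).const_mul (1 / C))).congr_deriv (by ring)
      · intro x; have := hg x; simp only [Pi.zero_apply]; linarith
    have lo : f (-(C * |t - f 0|)) ≤ t := by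
      have := mono (show -(C * |t - f 0|) ≤ 0 by have := mul_nonneg hC.le (abs_nonneg (t - f 0)); linarith)
      simp only at this
      have e1 : 1 / C * -(C * |t - f 0|) = -|t - f 0| := by field_simp
      rw [e1] at this
      have := neg_abs_le (t - f 0)
      linarith
    have hi : t ≤ f (C * |t - f 0|) := by
      have := mono (show 0 ≤ C * |t - f 0| by positivity)
      simp only at this
      have e1 : 1 / C * (C * |t - f 0|) = |t - f 0| := by field_simp
      rw [e1] at this
      have := le_abs_self (t - f 0)
      linarith
    exact mem_range_of_exists_le_of_exists_ge cf ⟨_, lo⟩ ⟨_, hi⟩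
  rcases H.sgn with h1 | h1
  · exact key z h H.d1 h1 t
  · obtain ⟨x, hx⟩ := key (fun x => -z x) (fun x => -h x) (fun x => (H.d1 x).neg)
      (fun x => by have := h1 x; linarith) (-t)
    exact ⟨x, by linarith⟩

structure Core (φ z h k S q l : ℝ → ℝ) (C : ℝ) : Prop where
  hC : 1 ≤ C
  dφ : ∀ x, HasDerivAt φ (z x) x
  Hz : Half z h k C
  HS : Half S q l C

noncomputable def Eph (T : ℝ) (φ : ℝ → ℝ) (a x : ℝ) : ℂ := e (T * φ x - a * x)

lemma Eph_cont {T : ℝ} {φ : ℝ → ℝ} (h : Continuous φ) (a : ℝ) : Continuous (Eph T φ a) := by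
  unfold Eph
  exact continuous_e.comp (by fun_prop)

lemma norm_Eph (T : ℝ) (φ : ℝ → ℝ) (a x : ℝ) : ‖Eph T φ a x‖ = 1 := norm_e _

lemma Core.cφ {φ z h k S q l C} (H : Core φ z h k S q l C) : Continuous φ :=
  continuous_iff_continuousAt.2 fun x => (H.dφ x).continuousAt

lemma Jf_ibp {φ z h k S q l C} (H : Core φ z h k S q l C) {A A' : ℝ → ℂ} {D : ℝ}
    (hA : Amp A A' D) (T B a w : ℝ) :
    Jf B S (fun x => A' x * Eph T φ a x) w = -(2 * (Real.pi : ℂ) * Complex.I) *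
      (Jf B S (fun x => ((T * z x - a : ℝ) : ℂ) * (A x * Eph T φ a x)) w
        + 2 * B * w * Jf B S (fun x => (q x : ℂ) * (A x * Eph T φ a x)) w) := by
  have cA := hA.cont
  have cA' := hA.cont'
  have cz := H.Hz.cz
  have cS := H.HS.cz
  have cq := H.HS.ch
  have cE := Eph_cont (T := T) H.cφ a
  have ce := continuous_e
  have cφ := H.cφ
  have ibp := intervalIntegral.integral_deriv_mul_eq_sub (a := 1) (b := 2)
    (u := A) (u' := A') (v := fun x => e ((T * φ x - a * x) + 2 * B * w * S x))
    (v' := fun x => 2 * (Real.pi : ℂ) * Complex.I * (((T * z x - a + 2 * B * w * q x : ℝ) : ℂ) *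
      e ((T * φ x - a * x) + 2 * B * w * S x)))
    (fun x hx => hA.der x (by rwa [uIcc_of_le (by norm_num)] at hx))
    (fun x _ => by
      refine hasDerivAt_e ?_
      refine ((((H.dφ x).const_mul T).sub ((hasDerivAt_id x).const_mul a)).add
        ((H.HS.d1 x).const_mul (2 * B * w))).congr_deriv ?_
      ring)
    (Continuous.intervalIntegrable (by fun_prop) _ _)
    (Continuous.intervalIntegrable (by fun_prop) _ _)
  simp only [hA.h1, hA.h2, zero_mul, sub_zero] at ibp
  rw [intervalIntegral.integral_add (Continuous.intervalIntegrable (by fun_prop) _ _)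
    (Continuous.intervalIntegrable (by fun_prop) _ _)] at ibp
  have e1 : Jf B S (fun x => A' x * Eph T φ a x) w =
      ∫ x in (1 : ℝ)..2, A' x * e ((T * φ x - a * x) + 2 * B * w * S x) := by
    unfold Jf Eph
    congr 1; ext x
    rw [e_add]; ring
  rw [e1, eq_neg_of_add_eq_zero_left ibp]
  unfold Jf
  rw [← intervalIntegral.integral_const_mul (2 * B * w : ℂ), ← intervalIntegral.integral_add,
    ← intervalIntegral.integral_const_mul, ← intervalIntegral.integral_neg]
  · congr 1; ext x
    rw [e_add]; unfold Eph; push_cast; ring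
  · exact Continuous.intervalIntegrable (by fun_prop) _ _
  · exact Continuous.intervalIntegrable (by fun_prop) _ _

lemma Qf_conj (B : ℝ) (S u : ℝ → ℝ) (P₁ P₂ : ℝ → ℂ) :
    Qf B S u P₁ P₂ = (starRingEnd ℂ) (Qf B S u P₂ P₁) := by
  unfold Qf
  rw [← intervalIntegral.intervalIntegral_conj]
  congr 1; ext w
  simp only [map_mul, Complex.conj_ofReal, Complex.conj_conj]
  ring

lemma Qf_ibp {φ z h k S q l C} (H : Core φ z h k S q l C) {A A' : ℝ → ℂ} {D : ℝ}
    (hA : Amp A A' D) {u : ℝ → ℝ} (hu : Continuous u) {P : ℝ → ℂ} (hP : Continuous P) (T B a : ℝ) :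
    Qf B S u (fun x => A' x * Eph T φ a x) P = -(2 * (Real.pi : ℂ) * Complex.I) *
      (Qf B S u (fun x => ((T * z x - a : ℝ) : ℂ) * (A x * Eph T φ a x)) P
        + 2 * B * Qf B S (fun w => w * u w) (fun x => (q x : ℂ) * (A x * Eph T φ a x)) P) := by
  have cA := hA.cont
  have cz := H.Hz.cz
  have cS := H.HS.cz
  have cq := H.HS.ch
  have cE := Eph_cont (T := T) H.cφ a
  have cc := Complex.continuous_conj
  have j1 := Jf_cont (B := B) cS hP
  have j2 := Jf_cont (B := B) (P := fun x => ((T * z x - a : ℝ) : ℂ) * (A x * Eph T φ a x)) cS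
    (by fun_prop)
  have j3 := Jf_cont (B := B) (P := fun x => (q x : ℂ) * (A x * Eph T φ a x)) cS
    (by fun_prop)
  unfold Qf
  simp_rw [Jf_ibp H hA]
  rw [← intervalIntegral.integral_const_mul (2 * B : ℂ), ← intervalIntegral.integral_add,
    ← intervalIntegral.integral_const_mul]
  · congr 1; ext w; push_cast; ring
  · exact Continuous.intervalIntegrable (by fun_prop) _ _
  · exact Continuous.intervalIntegrable (by fun_prop) _ _

/-- bundle of bounds on `u` -/
structure UB (u : ℝ → ℝ) (C : ℝ) : Prop where
  good : Good u
  dec : ∀ t, ‖Kk u t‖ ≤ C / (1 + t ^ 2) ^ 2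
  bd : ∀ w ∈ Icc (1 : ℝ) 2, |u w| ≤ C

lemma UB.nonneg {u C} (h : UB u C) : 0 ≤ C := (abs_nonneg _).trans (h.bd 1 (by norm_num))

lemma Good.exists_UB {u} (h : Good u) : ∃ C0 : ℝ, 0 < C0 ∧ ∀ C, C0 ≤ C → UB u C := by
  obtain ⟨C1, hC1, h1⟩ := h.decay
  obtain ⟨C2, h2⟩ := (isCompact_Icc (a := (1 : ℝ)) (b := 2)).exists_bound_of_continuousOn h.cont.continuousOn
  refine ⟨max C1 C2, lt_max_of_lt_left hC1, fun C hC => ⟨h, fun t => (h1 t).trans ?_, fun w hw => (h2 w hw).trans ?_⟩⟩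
  · gcongr; exact (le_max_left _ _).trans hC
  · exact (le_max_right _ _).trans hC

/-- trivial bound -/
lemma Qf_triv {φ z h k S q l C} (H : Core φ z h k S q l C) {u : ℝ → ℝ} {Cu : ℝ} (hu : UB u Cu)
    {P₁ P₂ : ℝ → ℂ} (h1 : Continuous P₁) (h2 : Continuous P₂) {D₁ D₂ B : ℝ} (hB : 0 < B)
    (hD1 : (∫ x in (1 : ℝ)..2, ‖P₁ x‖) ≤ D₁) (hD2 : ∀ x ∈ Icc (1 : ℝ) 2, ‖P₂ x‖ ≤ D₂) :
    ‖Qf B S u P₁ P₂‖ ≤ 4 * C ^ 3 * Cu * D₁ * D₂ / B := by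
  have hC := H.hC
  have hC0 : 0 < C := by linarith
  have hD0 : 0 ≤ D₂ := (norm_nonneg _).trans (hD2 1 (by norm_num))
  have hCu := hu.nonneg
  rw [Qf_eq H.HS.cz hu.good.cont h1 h2]
  have := Q2_bound (B := B) (k := 1 / C) (C := Cu) (M := 1) (D := D₂) (W := fun _ _ => 1) hB
    (by positivity) (by rw [div_le_one hC0]; exact hC) H.HS.cz hu.good.cont (by unfold Function.uncurry; fun_prop)
    h1 h2 H.HS.low hu.dec (fun x _ y _ => by simp; positivity) hD2
  refine this.trans ?_
  have hp := Real.pi_lt_four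
  have hI : 0 ≤ ∫ x in (1 : ℝ)..2, ‖P₁ x‖ := intervalIntegral.integral_nonneg (by norm_num) (fun _ _ => norm_nonneg _)
  rw [show Real.pi / (1 / C) ^ 3 * Cu * 1 * D₂ * (∫ x in (1 : ℝ)..2, ‖P₁ x‖) = Real.pi * C ^ 3 * Cu * (∫ x in (1 : ℝ)..2, ‖P₁ x‖) * D₂ by field_simp]
  gcongr

lemma Amp.intE {A A' : ℝ → ℂ} {D : ℝ} (hA : Amp A A' D) {φ : ℝ → ℝ} (hφ : Continuous φ) (T a : ℝ) :
    (∫ x in (1 : ℝ)..2, ‖A x * Eph T φ a x‖) ≤ D := by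
  have cA := hA.cont
  have cE := Eph_cont (T := T) hφ a
  have : (∫ x in (1 : ℝ)..2, ‖A x * Eph T φ a x‖) ≤ ∫ x in (1 : ℝ)..2, D := by
    apply int_mono12 (by fun_prop) (by fun_prop)
    intro x hx
    rw [norm_mul, norm_Eph, mul_one]; exact hA.bd x hx
  refine this.trans ?_
  simp; norm_num

lemma Amp.bdE {A A' : ℝ → ℂ} {D : ℝ} (hA : Amp A A' D) (φ : ℝ → ℝ) (T a : ℝ) :
    ∀ x ∈ Icc (1 : ℝ) 2, ‖A x * Eph T φ a x‖ ≤ D := by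
  intro x hx
  rw [norm_mul, norm_Eph, mul_one]; exact hA.bd x hx

/-- bound 1 -/
lemma bound1 {φ z h k S q l C} (H : Core φ z h k S q l C) {u : ℝ → ℝ} {Cu : ℝ} (hu : UB u Cu)
    {A₁ A₁' A₂ A₂' : ℝ → ℂ} {D₁ D₂ : ℝ} (hA1 : Amp A₁ A₁' D₁) (hA2 : Amp A₂ A₂' D₂)
    {T B : ℝ} (hT : 1 ≤ T) (hB : 0 < B) (a₁ a₂ : ℝ) :
    ‖Qf B S u (fun x => A₁ x * Eph T φ a₁ x) (fun x => A₂ x * Eph T φ a₂ x)‖ ≤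
      200 * C ^ 5 * Cu * D₁ * D₂ / T := by
  have hC := H.hC
  have hC0 : 0 < C := by linarith
  have hCu := hu.nonneg
  have cA1 := hA1.cont
  have cA2 := hA2.cont
  have cE1 := Eph_cont (T := T) H.cφ a₁
  have cE2 := Eph_cont (T := T) H.cφ a₂
  have hD1 := hA1.nonneg
  have hD2 := hA2.nonneg
  have hT0 : 0 < T := by linarith
  rcases le_total T (8 * C ^ 2 * B) with hc | hc
  · refine (Qf_triv H hu (by fun_prop) (by fun_prop) hB (hA1.intE H.cφ T a₁) (hA2.bdE φ T a₂)).trans ?_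
    rw [div_le_div_iff₀ hB hT0]
    calc 4 * C ^ 3 * Cu * D₁ * D₂ * T ≤ 4 * C ^ 3 * Cu * D₁ * D₂ * (8 * C ^ 2 * B) := by gcongr
      _ = 32 * (C ^ 5 * Cu * D₁ * D₂ * B) := by ring
      _ ≤ 200 * (C ^ 5 * Cu * D₁ * D₂ * B) := by gcongr; norm_num
      _ = _ := by ring
  · have J : ∀ {A A' : ℝ → ℂ} {D : ℝ}, Amp A A' D → ∀ a, ∀ w ∈ Icc (1 : ℝ) 2,
        ‖Jf B S (fun x => A x * Eph T φ a x) w‖ ≤ 10 * D / √(T / (2 * C)) := by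
      intro A A' D hA a w hw
      have e1 : Jf B S (fun x => A x * Eph T φ a x) w =
          ∫ x in (1 : ℝ)..2, A x * e ((T * φ x - a * x) + 2 * B * w * S x) := by
        unfold Jf Eph
        congr 1; ext x
        rw [e_add]; ring
      rw [e1]
      have cφ := H.cφ
      have cz := H.Hz.cz
      have ch := H.Hz.ch
      have cS := H.HS.cz
      have cq := H.HS.ch
      have cl := H.HS.ck
      have hsm : ∀ x ∈ Icc (1 : ℝ) 2, |2 * B * w * l x| ≤ T / (2 * C) := by
        intro x hx
        rw [abs_mul, abs_of_nonneg (by have := hw.1; positivity)]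
        calc 2 * B * w * |l x| ≤ 2 * B * 2 * C := by
              gcongr
              · exact hw.2
              · exact H.HS.kb x hx
          _ ≤ T / (2 * C) := by
              rw [le_div_iff₀ (by positivity)]; linarith
      have hTT : T * (1 / C) = T / (2 * C) + T / (2 * C) := by field_simp; norm_num
      refine vdc hA (F' := fun x => T * z x - a + 2 * B * w * q x)
        (F'' := fun x => T * h x + 2 * B * w * l x) (by positivity)
        (by fun_prop) (by fun_prop) (by fun_prop) ?_ ?_ ?_
      · intro x _
        refine ((((H.dφ x).const_mul T).sub ((hasDerivAt_id x).const_mul a)).add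
          ((H.HS.d1 x).const_mul (2 * B * w))).congr_deriv ?_
        ring
      · intro x hx
        exact (((H.Hz.d1 x).const_mul T).sub_const a).add ((H.HS.d2 x hx).const_mul (2 * B * w))
      · rcases H.Hz.sgn with hs | hs
        · left
          intro x hx
          have := mul_le_mul_of_nonneg_left (hs x) hT0.le
          have := (abs_le.1 (hsm x hx)).1
          linarith
        · right
          intro x hx
          have := mul_le_mul_of_nonneg_left (hs x) hT0.le
          have := (abs_le.1 (hsm x hx)).2
          linarith
    unfold Qf
    refine (intervalIntegral.norm_integral_le_of_norm_le_const (C := 200 * C ^ 5 * Cu * D₁ * D₂ / T) ?_).trans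
      (by norm_num)
    intro w hw
    rw [uIoc_of_le (by norm_num)] at hw
    have hw' : w ∈ Icc (1 : ℝ) 2 := ⟨hw.1.le, hw.2⟩
    rw [norm_mul, norm_mul, RCLike.norm_conj, Complex.norm_real, Real.norm_eq_abs]
    have b1 := J hA1 a₁ w hw'
    have b2 := J hA2 a₂ w hw'
    have b3 := hu.bd w hw'
    calc _ ≤ Cu * ((10 * D₁ / √(T / (2 * C))) * (10 * D₂ / √(T / (2 * C)))) := by gcongr
      _ = 100 * Cu * D₁ * D₂ / (√(T / (2 * C)) * √(T / (2 * C))) := by ring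
      _ = 200 * C * Cu * D₁ * D₂ / T := by
          rw [Real.mul_self_sqrt (by positivity)]; field_simp; ring
      _ ≤ _ := by
          gcongr
          exact le_self_pow₀ hC (by norm_num)


lemma Q2_lin {B : ℝ} {S u : ℝ → ℝ} {W₁ W₂ : ℝ → ℝ → ℝ} {P₁ P₂ : ℝ → ℂ} (hS : Continuous S)
    (hu : Continuous u) (c1 : Continuous W₁.uncurry) (c2 : Continuous W₂.uncurry)
    (h1 : Continuous P₁) (h2 : Continuous P₂) (s t : ℝ) :
    Q2 B S u (fun x y => s * W₁ x y + t * W₂ x y) P₁ P₂ =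
      s * Q2 B S u W₁ P₁ P₂ + t * Q2 B S u W₂ P₁ P₂ := by
  have hKc := Kk_cont hu
  have cc := Complex.continuous_conj
  have hW1 : Continuous fun p : ℝ × ℝ => W₁ p.1 p.2 := c1
  have hW2 : Continuous fun p : ℝ × ℝ => W₂ p.1 p.2 := c2
  have key : ∀ W : ℝ → ℝ → ℝ, Continuous (fun p : ℝ × ℝ => W p.1 p.2) →
      (Continuous fun p : ℝ × ℝ => (W p.1 p.2 : ℂ) * (P₁ p.1 * (starRingEnd ℂ) (P₂ p.2)) *
        Kk u (2 * B * (S p.1 - S p.2))) := by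
    intro W hW; fun_prop
  have k1 := key W₁ hW1
  have k2 := key W₂ hW2
  have i1 : ∀ x, Continuous fun y => (W₁ x y : ℂ) * (P₁ x * (starRingEnd ℂ) (P₂ y)) *
        Kk u (2 * B * (S x - S y)) := fun x => k1.comp (Continuous.prodMk_right x)
  have i2 : ∀ x, Continuous fun y => (W₂ x y : ℂ) * (P₁ x * (starRingEnd ℂ) (P₂ y)) *
        Kk u (2 * B * (S x - S y)) := fun x => k2.comp (Continuous.prodMk_right x)
  have j1 : Continuous fun x => ∫ y in (1 : ℝ)..2, (W₁ x y : ℂ) * (P₁ x * (starRingEnd ℂ) (P₂ y)) *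
        Kk u (2 * B * (S x - S y)) :=
    intervalIntegral.continuous_parametric_intervalIntegral_of_continuous' (by exact k1) _ _
  have j2 : Continuous fun x => ∫ y in (1 : ℝ)..2, (W₂ x y : ℂ) * (P₁ x * (starRingEnd ℂ) (P₂ y)) *
        Kk u (2 * B * (S x - S y)) :=
    intervalIntegral.continuous_parametric_intervalIntegral_of_continuous' (by exact k2) _ _
  unfold Q2
  rw [← intervalIntegral.integral_const_mul, ← intervalIntegral.integral_const_mul,
    ← intervalIntegral.integral_add ((j1.const_mul _).intervalIntegrable _ _)
      ((j2.const_mul _).intervalIntegrable _ _)]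
  congr 1; ext x
  rw [← intervalIntegral.integral_const_mul, ← intervalIntegral.integral_const_mul,
    ← intervalIntegral.integral_add (((i1 x).const_mul _).intervalIntegrable _ _)
      (((i2 x).const_mul _).intervalIntegrable _ _)]
  congr 1; ext y
  push_cast; ring

lemma Q2_sep {B : ℝ} {S u : ℝ → ℝ} {α β : ℝ → ℝ} {P₁ P₂ : ℝ → ℂ} (hS : Continuous S)
    (hu : Continuous u) (c1 : Continuous α) (c2 : Continuous β)
    (h1 : Continuous P₁) (h2 : Continuous P₂) :
    Qf B S u (fun x => (α x : ℂ) * P₁ x) (fun x => (β x : ℂ) * P₂ x) =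
      Q2 B S u (fun x y => α x * β y) P₁ P₂ := by
  rw [Qf_eq hS hu (by fun_prop) (by fun_prop)]
  unfold Q2
  congr 1; ext x; congr 1; ext y
  simp only [map_mul, Complex.conj_ofReal]; push_cast; ring

lemma Q2_left {B : ℝ} {S u : ℝ → ℝ} {α : ℝ → ℝ} {P₁ P₂ : ℝ → ℂ} (hS : Continuous S)
    (hu : Continuous u) (c1 : Continuous α)
    (h1 : Continuous P₁) (h2 : Continuous P₂) :
    Qf B S u (fun x => (α x : ℂ) * P₁ x) P₂ = Q2 B S u (fun x _ => α x) P₁ P₂ := by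
  have := Q2_sep (B := B) (β := fun _ => 1) hS hu c1 (by fun_prop) h1 h2
  simpa using this

lemma Q2_right {B : ℝ} {S u : ℝ → ℝ} {β : ℝ → ℝ} {P₁ P₂ : ℝ → ℂ} (hS : Continuous S)
    (hu : Continuous u) (c1 : Continuous β)
    (h1 : Continuous P₁) (h2 : Continuous P₂) :
    Qf B S u P₁ (fun x => (β x : ℂ) * P₂ x) = Q2 B S u (fun _ y => β y) P₁ P₂ := by
  have := Q2_sep (B := B) (α := fun _ => 1) hS hu (by fun_prop) c1 h1 h2
  simpa using this

lemma Q2_Sdiff {B : ℝ} {S u : ℝ → ℝ} {g : ℝ → ℝ} {P₁ P₂ : ℝ → ℂ} (hS : Continuous S)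
    (hu : Good u) (c1 : Continuous g)
    (h1 : Continuous P₁) (h2 : Continuous P₂) (hB : 0 < B) :
    ‖Q2 B S u (fun x y => g x * (S x - S y)) P₁ P₂‖ ≤
      ‖Qf B S (deriv u) (fun x => (g x : ℂ) * P₁ x) P₂‖ / B := by
  have h0 : Qf B S (deriv u) (fun x => (g x : ℂ) * P₁ x) P₂ =
      -(4 * (Real.pi : ℂ) * Complex.I * B) * Q2 B S u (fun x y => g x * (S x - S y)) P₁ P₂ := by
    rw [Q2_left hS hu.deriv.cont c1 h1 h2]
    unfold Q2
    rw [← intervalIntegral.integral_const_mul]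
    congr 1; ext x
    rw [← intervalIntegral.integral_const_mul]
    congr 1; ext y
    rw [Kk_deriv hu]; push_cast; ring
  rw [h0, norm_mul, le_div_iff₀ hB]
  have : ‖-(4 * (Real.pi : ℂ) * Complex.I * B)‖ = 4 * Real.pi * B := by
    simp [abs_of_pos Real.pi_pos, abs_of_pos hB]
  rw [this]
  have := norm_nonneg (Q2 B S u (fun x y => g x * (S x - S y)) P₁ P₂)
  have h4 : 1 ≤ 4 * Real.pi := by linarith [Real.pi_gt_three]
  nlinarith [mul_nonneg this hB.le]

lemma Q2_triv {φ z h k S q l C} (H : Core φ z h k S q l C) {u : ℝ → ℝ} {Cu : ℝ} (hu : UB u Cu)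
    {P₁ P₂ : ℝ → ℂ} (h1 : Continuous P₁) (h2 : Continuous P₂) {W : ℝ → ℝ → ℝ}
    (hW : Continuous W.uncurry) {D₁ D₂ B M : ℝ} (hB : 0 < B) (hM0 : 0 ≤ M)
    (hM : ∀ x ∈ Icc (1 : ℝ) 2, ∀ y ∈ Icc (1 : ℝ) 2, |W x y| ≤ M * (1 + (B * (x - y)) ^ 2))
    (hD1 : (∫ x in (1 : ℝ)..2, ‖P₁ x‖) ≤ D₁) (hD2 : ∀ x ∈ Icc (1 : ℝ) 2, ‖P₂ x‖ ≤ D₂) :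
    ‖Q2 B S u W P₁ P₂‖ ≤ 4 * C ^ 3 * Cu * D₁ * D₂ * M / B := by
  have hC := H.hC
  have hC0 : 0 < C := by linarith
  have hD0 : 0 ≤ D₂ := (norm_nonneg _).trans (hD2 1 (by norm_num))
  have hCu := hu.nonneg
  have := Q2_bound (B := B) (k := 1 / C) (C := Cu) (M := M) (D := D₂) (W := W) hB
    (by positivity) (by rw [div_le_one hC0]; exact hC) H.HS.cz hu.good.cont hW
    h1 h2 H.HS.low hu.dec hM hD2
  refine this.trans ?_
  have hp := Real.pi_lt_four
  have hI : 0 ≤ ∫ x in (1 : ℝ)..2, ‖P₁ x‖ := intervalIntegral.integral_nonneg (by norm_num) (fun _ _ => norm_nonneg _)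
  rw [show Real.pi / (1 / C) ^ 3 * Cu * M * D₂ * (∫ x in (1 : ℝ)..2, ‖P₁ x‖) = Real.pi * C ^ 3 * Cu * (∫ x in (1 : ℝ)..2, ‖P₁ x‖) * D₂ * M by field_simp]
  gcongr

/-- all data, with one constant -/
structure Dat (φ z h k S q l u : ℝ → ℝ) (V V' : ℝ → ℂ) (C : ℝ) : Prop where
  H : Core φ z h k S q l C
  hu : UB u C
  hu' : UB (deriv u) C
  hwu : UB (fun w => w * u w) C
  hV : Amp V V' C

/-- the good amplitude `h/q` -/
lemma Core.ratio {φ z h k S q l C} (H : Core φ z h k S q l C) {A A' : ℝ → ℂ} {D : ℝ} (hA : Amp A A' D) :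
    ∃ A'', Amp (fun x => ((h x / q x : ℝ) : ℂ) * A x) A'' (2 * (2 * C ^ 4) * D) := by
  have hC := H.hC
  have hC0 : 0 < C := by linarith
  have hq : ∀ x, q x ≠ 0 := fun x hx => by
    have := H.HS.habs x
    rw [hx, abs_zero] at this
    have : 0 < 1 / C := by positivity
    linarith
  have hqi : ∀ x, |q x|⁻¹ ≤ C := fun x => by
    have := H.HS.habs x
    have h2 : 0 < 1 / C := by positivity
    have := inv_anti₀ h2 this
    simpa using this
  have ch := H.Hz.ch
  have ck := H.Hz.ck
  have cq := H.HS.ch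
  have cl := H.HS.ck
  have c1 : Continuous fun x => h x / q x := ch.div cq hq
  have c2 : Continuous fun x => (k x * q x - h x * l x) / q x ^ 2 :=
    Continuous.div (by fun_prop) (by fun_prop) (fun x => pow_ne_zero _ (hq x))
  refine ⟨_, hA.mul_real (m' := fun x => (k x * q x - h x * l x) / q x ^ 2) c1 c2 ?_ ?_ ?_⟩
  · intro x hx
    exact (H.Hz.d2 x hx).div (H.HS.d2 x hx) (hq x)
  · intro x hx
    rw [abs_div, div_eq_mul_inv]
    calc |h x| * |q x|⁻¹ ≤ C * C := by
          gcongr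
          · exact H.Hz.up x
          · exact hqi x
      _ = 1 * C ^ 2 := by ring
      _ ≤ 2 * C ^ 4 := by gcongr <;> norm_num
  · have : (∫ x in (1 : ℝ)..2, |(k x * q x - h x * l x) / q x ^ 2|) ≤ ∫ x in (1 : ℝ)..2, 2 * C ^ 4 := by
      apply int_mono12 (by fun_prop) (by fun_prop)
      intro x hx
      rw [abs_div, div_eq_mul_inv, abs_pow, ← inv_pow]
      calc |k x * q x - h x * l x| * |q x|⁻¹ ^ 2 ≤ (C * C + C * C) * C ^ 2 := by
            gcongr
            · refine (abs_sub _ _).trans ?_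
              rw [abs_mul, abs_mul]
              gcongr
              · exact H.Hz.kb x hx
              · exact H.HS.up x
              · exact H.Hz.up x
              · exact H.HS.kb x hx
            · exact hqi x
        _ = 2 * C ^ 4 := by ring
    refine this.trans ?_
    simp; norm_num

lemma regime1 {φ z h k S q l u V V' C} (G : Dat φ z h k S q l u V V' C) {T B : ℝ} (hT : 1 ≤ T)
    (hB : 0 < B) (hTB : T ≤ B ^ 2) (a₁ a₂ : ℝ) :
    |a₁ - a₂| * ‖Qf B S u (fun x => V x * Eph T φ a₁ x) (fun x => V x * Eph T φ a₂ x)‖ ≤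
      1000 * C ^ 12 / B := by
  have H := G.H
  have hC := H.hC
  have hC0 : 0 < C := by linarith
  have hT0 : 0 < T := by linarith
  have cV := G.hV.cont
  have cV' := G.hV.cont'
  have cE1 := Eph_cont (T := T) H.cφ a₁
  have cE2 := Eph_cont (T := T) H.cφ a₂
  have cz := H.Hz.cz
  have cS := H.HS.cz
  have ch := H.Hz.ch
  have cq := H.HS.ch
  have cu := G.hu.good.cont
  have cwu := G.hwu.good.cont
  have hq : ∀ x, q x ≠ 0 := fun x hx => by
    have := H.HS.habs x
    rw [hx, abs_zero] at this
    have : 0 < 1 / C := by positivity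
    linarith
  have cg : Continuous fun x => h x / q x := ch.div cq hq
  set P₁ : ℝ → ℂ := fun x => V x * Eph T φ a₁ x with hP1
  set P₂ : ℝ → ℂ := fun x => V x * Eph T φ a₂ x with hP2
  have c1 : Continuous P₁ := by fun_prop
  have c2 : Continuous P₂ := by fun_prop
  have I1 : (∫ x in (1 : ℝ)..2, ‖P₁ x‖) ≤ C := G.hV.intE H.cφ T a₁
  have I2 : (∫ x in (1 : ℝ)..2, ‖P₂ x‖) ≤ C := G.hV.intE H.cφ T a₂
  have b1 : ∀ x ∈ Icc (1 : ℝ) 2, ‖P₁ x‖ ≤ C := G.hV.bdE φ T a₁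
  have b2 : ∀ x ∈ Icc (1 : ℝ) 2, ‖P₂ x‖ ≤ C := G.hV.bdE φ T a₂
  have IV : ∀ a, (∫ x in (1 : ℝ)..2, ‖V' x * Eph T φ a x‖) ≤ C := by
    intro a
    simp_rw [norm_mul, norm_Eph, mul_one]; exact G.hV.var
  -- the two integrations by parts
  have e1 := Qf_ibp H G.hV cu c2 T B a₁
  have e2 := Qf_ibp H G.hV cu c1 T B a₂
  have s1 := Qf_triv H G.hu (P₁ := fun x => V' x * Eph T φ a₁ x) (by fun_prop) c2 hB (IV a₁) b2
  have s2 := Qf_triv H G.hu (P₁ := fun x => V' x * Eph T φ a₂ x) (by fun_prop) c1 hB (IV a₂) b1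
  rw [← RCLike.norm_conj, ← Qf_conj] at s2
  have e2' := congrArg (starRingEnd ℂ) e2
  rw [map_mul, map_add, map_mul, ← Qf_conj, ← Qf_conj, ← Qf_conj] at e2'
  simp only [map_neg, map_mul, map_ofNat, Complex.conj_ofReal, Complex.conj_I] at e2'
  set s₁ := Qf B S u (fun x => V' x * Eph T φ a₁ x) P₂
  set s₂ := Qf B S u P₁ (fun x => V' x * Eph T φ a₂ x)
  rw [Q2_left (α := fun x => T * z x - a₁) cS cu (by fun_prop) c1 c2,
    Q2_left cS cwu cq c1 c2] at e1
  rw [Q2_right (β := fun x => T * z x - a₂) cS cu (by fun_prop) c1 c2,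
    Q2_right cS cwu cq c1 c2] at e2'
  have l1 := Q2_lin (B := B) (P₁ := P₁) (P₂ := P₂) (W₁ := fun x _ => T * z x - a₁) (W₂ := fun _ y => T * z y - a₂) cS cu
    (by unfold Function.uncurry; fun_prop) (by unfold Function.uncurry; fun_prop) c1 c2 1 (-1)
  have l2 := Q2_lin (B := B) (P₁ := P₁) (P₂ := P₂) (W₁ := fun x _ => q x) (W₂ := fun _ y => q y) cS cwu
    (by unfold Function.uncurry; fun_prop) (by unfold Function.uncurry; fun_prop) c1 c2 1 (-1)
  have l3 := Q2_lin (B := B) (P₁ := P₁) (P₂ := P₂) (W₁ := fun x y => z x - z y) (W₂ := fun _ _ => 1) cS cu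
    (by unfold Function.uncurry; fun_prop) (by unfold Function.uncurry; fun_prop) c1 c2 T (-(a₁ - a₂))
  have l4 := Q2_lin (B := B) (P₁ := P₁) (P₂ := P₂)
    (W₁ := fun x y => (z x - z y) - h x / q x * (S x - S y)) (W₂ := fun x y => h x / q x * (S x - S y)) cS cu
    (by unfold Function.uncurry; fun_prop (disch := first | exact hq _ | exact fun _ => hq _)) (by unfold Function.uncurry; fun_prop (disch := first | exact hq _ | exact fun _ => hq _)) c1 c2 1 1
  rw [← Qf_eq cS cu c1 c2] at l3
  rw [show (fun x y => T * (z x - z y) + -(a₁ - a₂) * 1) =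
    (fun x y => 1 * (T * z x - a₁) + -1 * (T * z y - a₂)) by ext x y; ring, l1] at l3
  rw [show (fun x y => 1 * (z x - z y - h x / q x * (S x - S y)) + 1 * (h x / q x * (S x - S y))) =
    (fun x y => z x - z y) by ext x y; ring] at l4
  -- bounds
  have B1 : ‖Q2 B S (fun w => w * u w) (fun x y => 1 * q x + -1 * q y) P₁ P₂‖ ≤
      4 * C ^ 3 * C * C * C * (C / B) / B := by
    refine Q2_triv H G.hwu c1 c2 (by unfold Function.uncurry; fun_prop) hB (by positivity) ?_ I1 b2
    intro x _ y _
    rw [show 1 * q x + -1 * q y = q x - q y by ring]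
    refine (H.HS.lip x y).trans ?_
    have : |x - y| ≤ 1 / B * (1 + (B * (x - y)) ^ 2) := by
      rw [mul_pow, ← sq_abs (x - y)]
      have h3 : 1 / B * (1 + B ^ 2 * |x - y| ^ 2) - |x - y| = 1 / B * ((1 - B * |x - y|) ^ 2 + B * |x - y|) := by
        field_simp; ring
      have : 0 ≤ 1 / B * ((1 - B * |x - y|) ^ 2 + B * |x - y|) := by positivity
      linarith
    calc C * |x - y| ≤ C * (1 / B * (1 + (B * (x - y)) ^ 2)) := by gcongr
      _ = _ := by ring
  have B2 : ‖Q2 B S u (fun x y => (z x - z y) - h x / q x * (S x - S y)) P₁ P₂‖ ≤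
      4 * C ^ 3 * C * C * C * (2 * C ^ 3 / B ^ 2) / B := by
    refine Q2_triv H G.hu c1 c2 (by unfold Function.uncurry; fun_prop (disch := first | exact hq _ | exact fun _ => hq _)) hB (by positivity) ?_ I1 b2
    intro x _ y _
    have t1 := H.Hz.tay hC0 x y
    have t2 := H.HS.tay hC0 x y
    have hqi : |h x / q x| ≤ C * C := by
      have := H.HS.habs x
      have h2 : 0 < 1 / C := by positivity
      have := inv_anti₀ h2 this
      rw [abs_div, div_eq_mul_inv]
      gcongr
      · exact H.Hz.up x
      · simpa using this
    have e3 : (z x - z y) - h x / q x * (S x - S y) =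
      (z x - z y - h x * (x - y)) - h x / q x * (S x - S y - q x * (x - y)) := by
      have := hq x
      field_simp; ring
    rw [e3]
    refine (abs_sub _ _).trans ?_
    rw [abs_mul]
    calc _ ≤ C * (x - y) ^ 2 + C * C * (C * (x - y) ^ 2) := by gcongr
      _ ≤ C ^ 3 * (x - y) ^ 2 + C * C * (C * (x - y) ^ 2) := by
          gcongr; exact le_self_pow₀ hC (by norm_num)
      _ = 2 * C ^ 3 / B ^ 2 * (0 + (B * (x - y)) ^ 2) := by field_simp; ring
      _ ≤ _ := by gcongr; norm_num
  obtain ⟨A'', hA''⟩ := H.ratio G.hV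
  have B3 := bound1 H G.hu' hA'' G.hV hT hB a₁ a₂
  have B4 := Q2_Sdiff (B := B) cS G.hu.good cg c1 c2 hB
  have e4 : (fun x => ((h x / q x : ℝ) : ℂ) * P₁ x) = fun x => ((h x / q x : ℝ) : ℂ) * V x * Eph T φ a₁ x := by
    ext x; rw [hP1]; ring
  rw [e4] at B4
  have B5 : ‖Q2 B S u (fun x y => h x / q x * (S x - S y)) P₁ P₂‖ ≤ 200 * C ^ 5 * C * (2 * (2 * C ^ 4) * C) * C / T / B :=
    B4.trans (by gcongr)
  clear_value s₁ s₂
  set Q := Qf B S u P₁ P₂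
  set X1 := Q2 B S u (fun x y => T * z x - a₁) P₁ P₂
  set Y1 := Q2 B S u (fun x y => T * z y - a₂) P₁ P₂
  set X2 := Q2 B S (fun w => w * u w) (fun x y => q x) P₁ P₂
  set Y2 := Q2 B S (fun w => w * u w) (fun x y => q y) P₁ P₂
  rw [l2] at B1
  rw [l4] at l3
  set R1 := Q2 B S u (fun x y => z x - z y - h x / q x * (S x - S y)) P₁ P₂
  set R2 := Q2 B S u (fun x y => h x / q x * (S x - S y)) P₁ P₂
  have hpi : (2 * (Real.pi : ℂ) * Complex.I) ≠ 0 := by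
    have := Real.pi_ne_zero
    simp [this]
  have fin : ((a₁ - a₂ : ℝ) : ℂ) * Q = T * R1 + T * R2 + (s₁ + s₂) / (2 * (Real.pi : ℂ) * Complex.I) +
      2 * B * ((1 : ℝ) * X2 + (-1 : ℝ) * Y2) := by
    rw [e1, e2']
    push_cast at l3 ⊢
    have : ((a₁ : ℂ) - a₂) * Q = T * (R1 + R2) - (X1 - Y1) := by linear_combination l3
    rw [this]
    field_simp
    ring
  have hn : |a₁ - a₂| * ‖Q‖ = ‖((a₁ - a₂ : ℝ) : ℂ) * Q‖ := by
    rw [norm_mul, Complex.norm_real, Real.norm_eq_abs]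
  rw [hn, fin]
  have n2pi : ‖2 * (Real.pi : ℂ) * Complex.I‖ = 2 * Real.pi := by
    simp [abs_of_pos Real.pi_pos]
  have B6 : ‖(s₁ + s₂) / (2 * (Real.pi : ℂ) * Complex.I)‖ ≤ ‖s₁‖ + ‖s₂‖ := by
    rw [norm_div, n2pi]
    refine (div_le_self (norm_nonneg _) (by linarith [Real.pi_gt_three])).trans (norm_add_le _ _)
  have nT : ‖(T : ℂ)‖ = T := by rw [Complex.norm_real, Real.norm_eq_abs, abs_of_pos hT0]
  have nB : ‖2 * (B : ℂ)‖ = 2 * B := by rw [norm_mul, Complex.norm_real, Real.norm_eq_abs, abs_of_pos hB]; simp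
  have tri : ‖(T : ℂ) * R1 + T * R2 + (s₁ + s₂) / (2 * (Real.pi : ℂ) * Complex.I) +
      2 * B * ((1 : ℝ) * X2 + (-1 : ℝ) * Y2)‖ ≤ T * ‖R1‖ + T * ‖R2‖ + (‖s₁‖ + ‖s₂‖) +
        2 * B * ‖((1 : ℝ) * X2 + (-1 : ℝ) * Y2 : ℂ)‖ := by
    refine (norm_add_le _ _).trans (add_le_add ((norm_add_le _ _).trans (add_le_add ((norm_add_le _ _).trans (add_le_add ?_ ?_)) B6)) ?_)
    · rw [norm_mul, nT]
    · rw [norm_mul, nT]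
    · rw [norm_mul, nB]
  refine tri.trans ?_
  calc _ ≤ T * (4 * C ^ 3 * C * C * C * (2 * C ^ 3 / B ^ 2) / B) +
        T * (200 * C ^ 5 * C * (2 * (2 * C ^ 4) * C) * C / T / B) +
        (4 * C ^ 3 * C * C * C / B + 4 * C ^ 3 * C * C * C / B) +
        2 * B * (4 * C ^ 3 * C * C * C * (C / B) / B) := by gcongr
    _ = (T / B ^ 2) * (8 * C ^ 9 / B) + 800 * C ^ 12 / B + 8 * C ^ 6 / B + 8 * C ^ 7 / B := by
        field_simp; ring
    _ ≤ 1 * (8 * C ^ 12 / B) + 800 * C ^ 12 / B + 8 * C ^ 12 / B + 8 * C ^ 12 / B := by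
        gcongr
        · rw [div_le_one (by positivity)]; exact hTB
        all_goals norm_num
    _ = 824 * C ^ 12 / B := by ring
    _ ≤ _ := by gcongr; norm_num


lemma mreg {φ z h k S q l C} (H : Core φ z h k S q l C) (ξ : ℝ) {η : ℝ} (hη : 0 < η)
    {A A' : ℝ → ℂ} {D : ℝ} (hA : Amp A A' D) :
    ∃ A'', Amp (fun x => (((S x - S ξ) * (z x - z ξ) / ((z x - z ξ) ^ 2 + η ^ 2) : ℝ) : ℂ) * A x) A''
      (2 * (6 * C ^ 4) * D) := by
  have hC := H.hC
  have hC0 : 0 < C := by linarith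
  have cz := H.Hz.cz
  have cS := H.HS.cz
  have ch := H.Hz.ch
  have cq := H.HS.ch
  have hp : ∀ x, 0 < (z x - z ξ) ^ 2 + η ^ 2 := fun x => by positivity
  have hp0 : ∀ x, (z x - z ξ) ^ 2 + η ^ 2 ≠ 0 := fun x => (hp x).ne'
  have hd : ∀ x, |x - ξ| ≤ C * |z x - z ξ| := fun x => by
    have := H.Hz.low x ξ
    rw [one_div, inv_mul_le_iff₀ hC0] at this
    exact this
  have hs : ∀ x, |S x - S ξ| ≤ C ^ 2 * |z x - z ξ| := fun x => by
    calc _ ≤ C * |x - ξ| := H.HS.upp x ξ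
      _ ≤ C * (C * |z x - z ξ|) := by gcongr; exact hd x
      _ = _ := by ring
  set N : ℝ → ℝ := fun x => (z x - z ξ) ^ 2 * (q x * (z x - z ξ) - (S x - S ξ) * h x) +
    η ^ 2 * (q x * (z x - z ξ) + (S x - S ξ) * h x) with hN
  have c1 : Continuous fun x => (S x - S ξ) * (z x - z ξ) / ((z x - z ξ) ^ 2 + η ^ 2) :=
    Continuous.div (by fun_prop) (by fun_prop) hp0
  have c2 : Continuous fun x => N x / ((z x - z ξ) ^ 2 + η ^ 2) ^ 2 :=
    Continuous.div (by fun_prop) (by fun_prop) (fun x => pow_ne_zero _ (hp0 x))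
  refine ⟨_, hA.mul_real (m' := fun x => N x / ((z x - z ξ) ^ 2 + η ^ 2) ^ 2) c1 c2 ?_ ?_ ?_⟩
  · intro x _
    have dz := (H.Hz.d1 x).sub_const (z ξ)
    have dS := (H.HS.d1 x).sub_const (S ξ)
    refine ((dS.mul dz).div ((dz.pow 2).add_const (η ^ 2)) (hp0 x)).congr_deriv ?_
    simp only [hN]
    congr 1
    simp only [Nat.cast_ofNat, Pi.mul_apply, Pi.pow_apply]
    ring
  · intro x hx
    rw [abs_div, abs_of_pos (hp x), div_le_iff₀ (hp x), abs_mul]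
    calc _ ≤ C ^ 2 * |z x - z ξ| * |z x - z ξ| := by gcongr; exact hs x
      _ = C ^ 2 * ((z x - z ξ) ^ 2 + 0) := by rw [← sq_abs (z x - z ξ)]; ring
      _ ≤ 6 * C ^ 4 * ((z x - z ξ) ^ 2 + η ^ 2) := by
        gcongr
        · calc C ^ 2 = 1 * C ^ 2 := by ring
            _ ≤ 6 * C ^ 4 := by gcongr <;> norm_num
        · positivity
  · have key : ∀ x ∈ Icc (1 : ℝ) 2, |N x / ((z x - z ξ) ^ 2 + η ^ 2) ^ 2| ≤
        2 * C ^ 4 + C ^ 3 / η * (1 / (1 + (1 / (C * η) * (ξ - x)) ^ 2)) := by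
      intro x _
      set Z := z x - z ξ with hZ
      set s := S x - S ξ with hsd
      have t1 := H.Hz.tay hC0 x ξ
      have t2 := H.HS.tay hC0 x ξ
      have hdx := hd x
      have hsx := hs x
      rw [← hZ] at t1 hdx hsx
      rw [← hsd] at t2 hsx
      have u1 := H.HS.up x
      have u2 := H.Hz.up x
      have hpx := hp x
      rw [← hZ] at hpx
      have n1 : |q x * Z - s * h x| ≤ 2 * C ^ 4 * Z ^ 2 := by
        rw [show q x * Z - s * h x = q x * (Z - h x * (x - ξ)) - h x * (s - q x * (x - ξ)) by ring]
        refine (abs_sub _ _).trans ?_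
        rw [abs_mul, abs_mul]
        calc _ ≤ C * (C * (x - ξ) ^ 2) + C * (C * (x - ξ) ^ 2) := by gcongr
          _ = 2 * C ^ 2 * |x - ξ| ^ 2 := by rw [sq_abs]; ring
          _ ≤ 2 * C ^ 2 * (C * |Z|) ^ 2 := by gcongr
          _ = _ := by rw [mul_pow, sq_abs]; ring
      have n2 : |q x * Z + s * h x| ≤ 2 * C ^ 3 * |Z| := by
        refine (abs_add_le _ _).trans ?_
        rw [abs_mul, abs_mul]
        calc _ ≤ C * |Z| + C ^ 2 * |Z| * C := by gcongr
          _ ≤ C ^ 3 * |Z| + C ^ 2 * |Z| * C := by gcongr; exact le_self_pow₀ hC (by norm_num)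
          _ = _ := by ring
      have n3 : |N x| ≤ 2 * C ^ 4 * (Z ^ 2 + η ^ 2) ^ 2 + C ^ 3 * η * (Z ^ 2 + η ^ 2) := by
        simp only [hN]
        rw [← hZ, ← hsd]
        refine (abs_add_le _ _).trans ?_
        rw [abs_mul, abs_mul, abs_of_nonneg (sq_nonneg Z), abs_of_nonneg (sq_nonneg η)]
        refine add_le_add ?_ ?_
        · calc _ ≤ Z ^ 2 * (2 * C ^ 4 * Z ^ 2) := by gcongr
            _ = 2 * C ^ 4 * (Z ^ 2 + 0) ^ 2 := by ring
            _ ≤ _ := by gcongr; positivity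
        · calc _ ≤ η ^ 2 * (2 * C ^ 3 * |Z|) := by gcongr
            _ = C ^ 3 * η * (2 * |Z| * η) := by ring
            _ ≤ C ^ 3 * η * (Z ^ 2 + η ^ 2) := by
              gcongr
              rw [← sq_abs Z]
              exact two_mul_le_add_sq _ _
      rw [abs_div, abs_of_pos (a := (Z ^ 2 + η ^ 2) ^ 2) (by positivity)]
      calc _ ≤ (2 * C ^ 4 * (Z ^ 2 + η ^ 2) ^ 2 + C ^ 3 * η * (Z ^ 2 + η ^ 2)) / (Z ^ 2 + η ^ 2) ^ 2 := by gcongr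
        _ = 2 * C ^ 4 + C ^ 3 * η / (Z ^ 2 + η ^ 2) := by field_simp
        _ ≤ 2 * C ^ 4 + C ^ 3 * η / ((|x - ξ| / C) ^ 2 + η ^ 2) := by
          have h7 : (|x - ξ| / C) ^ 2 ≤ Z ^ 2 := by
            rw [← sq_abs Z]
            gcongr
            rw [div_le_iff₀ hC0]; linarith
          have h8 : (|x - ξ| / C) ^ 2 + η ^ 2 ≤ Z ^ 2 + η ^ 2 := by linarith
          have h9 : 0 < (|x - ξ| / C) ^ 2 + η ^ 2 := by positivity
          exact add_le_add le_rfl (div_le_div_of_nonneg_left (by positivity) h9 h8)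
        _ = _ := by
          congr 1
          rw [div_pow, sq_abs]
          field_simp
          ring
    have c3 : Continuous fun x => 1 / (1 + (1 / (C * η) * (ξ - x)) ^ 2) :=
      Continuous.div (by fun_prop) (by fun_prop) (fun x => by positivity)
    refine (int_mono12 (by fun_prop) (by fun_prop) key).trans ?_
    rw [intervalIntegral.integral_add (Continuous.intervalIntegrable (by fun_prop) _ _)
      (Continuous.intervalIntegrable (by fun_prop) _ _), intervalIntegral.integral_const_mul (C ^ 3 / η)]
    have := int_kern (b := 1 / (C * η)) (by positivity) ξ
    calc _ ≤ (∫ x in (1 : ℝ)..2, 2 * C ^ 4) + C ^ 3 / η * (4 / (1 / (C * η))) := by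
          refine add_le_add le_rfl (mul_le_mul_of_nonneg_left (this.trans ?_) (by positivity))
          gcongr
          exact Real.pi_lt_four.le
      _ = 6 * C ^ 4 := by
          simp; field_simp; ring

lemma single {φ z h k S q l u V V' C} (G : Dat φ z h k S q l u V V' C) {T B : ℝ} (hT : 1 ≤ T)
    (hB : 0 < B) (hTB : B ^ 2 ≤ T) (a b ξ : ℝ) (hξ : z ξ = a / T) :
    T * ‖Qf B S u (fun x => ((S x - S ξ : ℝ) : ℂ) * (V x * Eph T φ a x)) (fun x => V x * Eph T φ b x)‖ ≤
      10000 * C ^ 13 / B := by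
  have H := G.H
  have hC := H.hC
  have hC0 : 0 < C := by linarith
  have hT0 : 0 < T := by linarith
  have cV := G.hV.cont
  have cV' := G.hV.cont'
  have cE1 := Eph_cont (T := T) H.cφ a
  have cE2 := Eph_cont (T := T) H.cφ b
  have cz := H.Hz.cz
  have cS := H.HS.cz
  have cq := H.HS.ch
  have cu := G.hu.good.cont
  set η := 1 / T with hηd
  have hη : 0 < η := by positivity
  have hp : ∀ x, 0 < (z x - z ξ) ^ 2 + η ^ 2 := fun x => by positivity
  have hp0 : ∀ x, (z x - z ξ) ^ 2 + η ^ 2 ≠ 0 := fun x => (hp x).ne'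
  set P₁ : ℝ → ℂ := fun x => V x * Eph T φ a x with hP1
  set P₂ : ℝ → ℂ := fun x => V x * Eph T φ b x with hP2
  have c1 : Continuous P₁ := by fun_prop
  have c2 : Continuous P₂ := by fun_prop
  have b1 : ∀ x ∈ Icc (1 : ℝ) 2, ‖P₁ x‖ ≤ C := G.hV.bdE φ T a
  have b2 : ∀ x ∈ Icc (1 : ℝ) 2, ‖P₂ x‖ ≤ C := G.hV.bdE φ T b
  set m : ℝ → ℝ := fun x => (S x - S ξ) * (z x - z ξ) / ((z x - z ξ) ^ 2 + η ^ 2) with hm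
  set r : ℝ → ℝ := fun x => (S x - S ξ) * η ^ 2 / ((z x - z ξ) ^ 2 + η ^ 2) with hr
  have cm : Continuous m := Continuous.div (by fun_prop) (by fun_prop) hp0
  have cr : Continuous r := Continuous.div (by fun_prop) (by fun_prop) hp0
  have hs : ∀ x, |S x - S ξ| ≤ C ^ 2 * |z x - z ξ| := fun x => by
    have := H.Hz.low x ξ
    rw [one_div, inv_mul_le_iff₀ hC0] at this
    calc _ ≤ C * |x - ξ| := H.HS.upp x ξ
      _ ≤ C * (C * |z x - z ξ|) := by gcongr
      _ = _ := by ring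
  have hrb : ∀ x, |r x| ≤ C ^ 2 * η := by
    intro x
    simp only [hr]
    rw [abs_div, abs_of_pos (hp x), div_le_iff₀ (hp x), abs_mul, abs_of_nonneg (sq_nonneg η)]
    calc _ ≤ C ^ 2 * |z x - z ξ| * η ^ 2 := by gcongr; exact hs x
      _ = C ^ 2 * η * (|z x - z ξ| * η) := by ring
      _ ≤ C ^ 2 * η * ((z x - z ξ) ^ 2 + η ^ 2) := by
        gcongr
        rw [← sq_abs (z x - z ξ)]
        nlinarith [two_mul_le_add_sq |z x - z ξ| η, mul_nonneg (abs_nonneg (z x - z ξ)) hη.le]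
  obtain ⟨A'', hA⟩ := mreg H ξ hη G.hV
  have hA2 := hA.mul_real (m := q) (m' := l) (M := C) cq H.HS.ck (H.HS.d2) (fun x _ => H.HS.up x) (by
    have cl := H.HS.ck
    refine (int_mono12 (g := fun _ => C) (by fun_prop) (by fun_prop) H.HS.kb).trans ?_
    simp; norm_num)
  have ibp := Qf_ibp H hA cu c2 T B a
  have cA'' := hA.cont'
  have s1 := Qf_triv H G.hu (P₁ := fun x => A'' x * Eph T φ a x) (D₁ := 2 * (6 * C ^ 4) * C) (by fun_prop) c2 hB
    (by simp_rw [norm_mul, norm_Eph, mul_one]; exact hA.var) b2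
  have s2 := bound1 H G.hwu hA2 G.hV hT hB a b
  have s3 := Qf_triv H G.hu (P₁ := fun x => (r x : ℂ) * P₁ x) (D₁ := C ^ 2 * η * C) (by fun_prop) c2 hB
    (by
      refine (int_mono12 (g := fun _ => C ^ 2 * η * C) (by fun_prop) (by fun_prop) ?_).trans ?_
      · intro x hx
        rw [norm_mul, Complex.norm_real, Real.norm_eq_abs]
        gcongr
        · exact hrb x
        · exact b1 x hx
      · simp; norm_num) b2
  have e1 : (fun x => (q x : ℂ) * ((m x : ℂ) * V x) * Eph T φ a x) =
      (fun x => (q x : ℂ) * ((m x : ℂ) * V x * Eph T φ a x)) := by ext x; ring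
  change Qf B S u (fun x => A'' x * Eph T φ a x) P₂ = -(2 * (Real.pi : ℂ) * Complex.I) *
    (Qf B S u (fun x => ((T * z x - a : ℝ) : ℂ) * ((m x : ℂ) * V x * Eph T φ a x)) P₂ +
      2 * B * Qf B S (fun w => w * u w) (fun x => (q x : ℂ) * ((m x : ℂ) * V x * Eph T φ a x)) P₂) at ibp
  change ‖Qf B S (fun w => w * u w) (fun x => (q x : ℂ) * ((m x : ℂ) * V x) * Eph T φ a x) P₂‖ ≤ _ at s2
  rw [e1] at s2
  have lin := Q2_lin (B := B) (P₁ := P₁) (P₂ := P₂) (W₁ := fun x _ => (T * z x - a) * m x)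
    (W₂ := fun x _ => r x) cS cu
    (by unfold Function.uncurry; fun_prop) (by unfold Function.uncurry; fun_prop) c1 c2 1 T
  rw [← Q2_left (α := fun x => (T * z x - a) * m x) cS cu (by fun_prop) c1 c2, ← Q2_left cS cu cr c1 c2] at lin
  have e2 : (fun (x : ℝ) (_ : ℝ) => 1 * ((T * z x - a) * m x) + T * r x) = fun x _ => T * (S x - S ξ) := by
    ext x y
    have : T * z x - a = T * (z x - z ξ) := by rw [hξ]; field_simp
    rw [this]
    simp only [hm, hr]
    have := hp0 x
    field_simp
  have e3 : (fun x => (((T * z x - a) * m x : ℝ) : ℂ) * P₁ x) =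
      (fun x => ((T * z x - a : ℝ) : ℂ) * ((m x : ℂ) * V x * Eph T φ a x)) := by
    ext x; simp only [hP1]; push_cast; ring
  rw [e2, e3, ← Q2_left (α := fun x => T * (S x - S ξ)) cS cu (by fun_prop) c1 c2] at lin
  have e4 : Qf B S u (fun x => ((T * (S x - S ξ) : ℝ) : ℂ) * P₁ x) P₂ =
      T * Qf B S u (fun x => ((S x - S ξ : ℝ) : ℂ) * P₁ x) P₂ := by
    have := Q2_lin (B := B) (P₁ := P₁) (P₂ := P₂) (W₁ := fun x _ => S x - S ξ)
      (W₂ := fun x _ => 0) cS cu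
      (by unfold Function.uncurry; fun_prop) (by unfold Function.uncurry; fun_prop) c1 c2 T 0
    rw [← Q2_left (α := fun x => S x - S ξ) cS cu (by fun_prop) c1 c2] at this
    simp only [mul_zero, add_zero, Complex.ofReal_zero, zero_mul] at this
    rw [← Q2_left (α := fun x => T * (S x - S ξ)) cS cu (by fun_prop) c1 c2] at this
    exact this
  rw [e4] at lin
  set Q1 := Qf B S u (fun x => ((S x - S ξ : ℝ) : ℂ) * P₁ x) P₂
  set Y := Qf B S u (fun x => ((T * z x - a : ℝ) : ℂ) * ((m x : ℂ) * V x * Eph T φ a x)) P₂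
  set Y2 := Qf B S (fun w => w * u w) (fun x => (q x : ℂ) * ((m x : ℂ) * V x * Eph T φ a x)) P₂
  set s₁ := Qf B S u (fun x => A'' x * Eph T φ a x) P₂
  set R := Qf B S u (fun x => (r x : ℂ) * P₁ x) P₂
  have hpi : (2 * (Real.pi : ℂ) * Complex.I) ≠ 0 := by
    have := Real.pi_ne_zero
    simp [this]
  have fin : (T : ℂ) * Q1 = -(s₁ / (2 * (Real.pi : ℂ) * Complex.I)) - 2 * B * Y2 + T * R := by
    rw [lin, ibp]
    push_cast
    field_simp
    ring
  have n2pi : ‖2 * (Real.pi : ℂ) * Complex.I‖ = 2 * Real.pi := by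
    simp [abs_of_pos Real.pi_pos]
  have nT : ‖(T : ℂ)‖ = T := by rw [Complex.norm_real, Real.norm_eq_abs, abs_of_pos hT0]
  have nB : ‖2 * (B : ℂ)‖ = 2 * B := by rw [norm_mul, Complex.norm_real, Real.norm_eq_abs, abs_of_pos hB]; simp
  have hn : T * ‖Q1‖ = ‖(T : ℂ) * Q1‖ := by rw [norm_mul, nT]
  rw [hn, fin]
  have tri : ‖-(s₁ / (2 * (Real.pi : ℂ) * Complex.I)) - 2 * B * Y2 + T * R‖ ≤ ‖s₁‖ + 2 * B * ‖Y2‖ + T * ‖R‖ := by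
    refine (norm_add_le _ _).trans (add_le_add ((norm_sub_le _ _).trans (add_le_add ?_ ?_)) ?_)
    · rw [norm_neg, norm_div, n2pi]
      exact div_le_self (norm_nonneg _) (by linarith [Real.pi_gt_three])
    · rw [norm_mul, nB]
    · rw [norm_mul, nT]
  refine tri.trans ?_
  calc _ ≤ 4 * C ^ 3 * C * (2 * (6 * C ^ 4) * C) * C / B +
        2 * B * (200 * C ^ 5 * C * (2 * C * (2 * (6 * C ^ 4) * C)) * C / T) +
        T * (4 * C ^ 3 * C * (C ^ 2 * η * C) * C / B) := by gcongr
    _ = 48 * C ^ 10 / B + (B ^ 2 / T) * (9600 * C ^ 13 / B) + 4 * C ^ 8 / B := by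
        rw [hηd]; field_simp; ring
    _ ≤ 48 * C ^ 13 / B + 1 * (9600 * C ^ 13 / B) + 4 * C ^ 13 / B := by
        gcongr
        · norm_num
        · rw [div_le_one hT0]; exact hTB
        · norm_num
    _ = 9652 * C ^ 13 / B := by ring
    _ ≤ _ := by gcongr; norm_num

lemma regime2 {φ z h k S q l u V V' C} (G : Dat φ z h k S q l u V V' C) {T B : ℝ} (hT : 1 ≤ T)
    (hB : 0 < B) (hTB : B ^ 2 ≤ T) (a₁ a₂ : ℝ) :
    |a₁ - a₂| * ‖Qf B S u (fun x => V x * Eph T φ a₁ x) (fun x => V x * Eph T φ a₂ x)‖ ≤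
      30000 * C ^ 15 / B := by
  have H := G.H
  have hC := H.hC
  have hC0 : 0 < C := by linarith
  have hT0 : 0 < T := by linarith
  have cV := G.hV.cont
  have cE1 := Eph_cont (T := T) H.cφ a₁
  have cE2 := Eph_cont (T := T) H.cφ a₂
  have cS := H.HS.cz
  have cu := G.hu.good.cont
  obtain ⟨ξ₁, h1⟩ := H.Hz.surj hC0 (a₁ / T)
  obtain ⟨ξ₂, h2⟩ := H.Hz.surj hC0 (a₂ / T)
  have t1 := single G hT hB hTB a₁ a₂ ξ₁ h1
  have t2 := single G hT hB hTB a₂ a₁ ξ₂ h2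
  have t3 := bound1 H G.hu' G.hV G.hV hT hB a₁ a₂
  rw [← RCLike.norm_conj, ← Qf_conj] at t2
  set P₁ : ℝ → ℂ := fun x => V x * Eph T φ a₁ x with hP1
  set P₂ : ℝ → ℂ := fun x => V x * Eph T φ a₂ x with hP2
  have c1 : Continuous P₁ := by fun_prop
  have c2 : Continuous P₂ := by fun_prop
  have t4 := Q2_Sdiff (B := B) (g := fun _ => 1) cS G.hu.good (by fun_prop) c1 c2 hB
  simp only [Complex.ofReal_one, one_mul] at t4
  rw [Q2_left (α := fun x => S x - S ξ₁) cS cu (by fun_prop) c1 c2] at t1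
  rw [Q2_right (β := fun x => S x - S ξ₂) cS cu (by fun_prop) c1 c2] at t2
  have l1 := Q2_lin (B := B) (P₁ := P₁) (P₂ := P₂) (W₁ := fun x _ => S x - S ξ₁)
    (W₂ := fun _ y => S y - S ξ₂) cS cu
    (by unfold Function.uncurry; fun_prop) (by unfold Function.uncurry; fun_prop) c1 c2 1 (-1)
  have l2 := Q2_lin (B := B) (P₁ := P₁) (P₂ := P₂) (W₁ := fun x y => S x - S y)
    (W₂ := fun _ _ => 1) cS cu
    (by unfold Function.uncurry; fun_prop) (by unfold Function.uncurry; fun_prop) c1 c2 1 (-(S ξ₁ - S ξ₂))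
  rw [← Qf_eq cS cu c1 c2] at l2
  rw [show (fun x y => 1 * (S x - S y) + -(S ξ₁ - S ξ₂) * 1) =
    (fun x y => 1 * (S x - S ξ₁) + -1 * (S y - S ξ₂)) by ext x y; ring, l1] at l2
  set Q := Qf B S u P₁ P₂
  set X := Q2 B S u (fun x y => S x - S ξ₁) P₁ P₂
  set Y := Q2 B S u (fun x y => S y - S ξ₂) P₁ P₂
  set Z := Q2 B S u (fun x y => S x - S y) P₁ P₂
  have e1 : ((S ξ₁ - S ξ₂ : ℝ) : ℂ) * Q = Z - X + Y := by
    push_cast at l2 ⊢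
    linear_combination l2
  have e2 : |S ξ₁ - S ξ₂| * ‖Q‖ ≤ ‖Z‖ + ‖X‖ + ‖Y‖ := by
    have : |S ξ₁ - S ξ₂| * ‖Q‖ = ‖((S ξ₁ - S ξ₂ : ℝ) : ℂ) * Q‖ := by
      rw [norm_mul, Complex.norm_real, Real.norm_eq_abs]
    rw [this, e1]
    exact (norm_add_le _ _).trans (by gcongr; exact norm_sub_le _ _)
  have e3 : |a₁ - a₂| ≤ T * (C * (C * |S ξ₁ - S ξ₂|)) := by
    have h3 : a₁ - a₂ = T * (z ξ₁ - z ξ₂) := by rw [h1, h2]; field_simp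
    rw [h3, abs_mul, abs_of_pos hT0]
    gcongr
    refine (H.Hz.upp _ _).trans ?_
    gcongr
    have := H.HS.low ξ₁ ξ₂
    rwa [one_div, inv_mul_le_iff₀ hC0] at this
  have e4 : T * ‖Z‖ ≤ 200 * C ^ 8 / B := by
    calc T * ‖Z‖ ≤ T * ((200 * C ^ 5 * C * C * C / T) / B) := by
          gcongr
          exact t4.trans (by gcongr)
      _ = _ := by field_simp
  calc |a₁ - a₂| * ‖Q‖ ≤ T * (C * (C * |S ξ₁ - S ξ₂|)) * ‖Q‖ := by gcongr
    _ = C ^ 2 * (T * (|S ξ₁ - S ξ₂| * ‖Q‖)) := by ring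
    _ ≤ C ^ 2 * (T * (‖Z‖ + ‖X‖ + ‖Y‖)) := by gcongr
    _ = C ^ 2 * (T * ‖Z‖ + T * ‖X‖ + T * ‖Y‖) := by ring
    _ ≤ C ^ 2 * (200 * C ^ 8 / B + 10000 * C ^ 13 / B + 10000 * C ^ 13 / B) := by gcongr
    _ ≤ C ^ 2 * (200 * C ^ 13 / B + 10000 * C ^ 13 / B + 10000 * C ^ 13 / B) := by gcongr; norm_num
    _ = 20200 * C ^ 15 / B := by ring
    _ ≤ _ := by gcongr; norm_num

theorem core {φ z h k S q l u V V' C} (G : Dat φ z h k S q l u V V' C) {T B : ℝ} (hT : 1 ≤ T)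
    (hB : 0 < B) (a₁ a₂ : ℝ) :
    ‖Qf B S u (fun x => V x * Eph T φ a₁ x) (fun x => V x * Eph T φ a₂ x)‖ ≤ 30000 * C ^ 15 / T ∧
    |a₁ - a₂| * ‖Qf B S u (fun x => V x * Eph T φ a₁ x) (fun x => V x * Eph T φ a₂ x)‖ ≤
      30000 * C ^ 15 / B := by
  have hC := G.H.hC
  have hT0 : 0 < T := by linarith
  constructor
  · refine (bound1 G.H G.hu G.hV G.hV hT hB a₁ a₂).trans ?_
    calc 200 * C ^ 5 * C * C * C / T = 200 * C ^ 8 / T := by ring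
      _ ≤ _ := by gcongr <;> norm_num
  · rcases le_total T (B ^ 2) with h1 | h1
    · refine (regime1 G hT hB h1 a₁ a₂).trans ?_
      gcongr <;> norm_num
    · exact regime2 G hT hB h1 a₁ a₂


noncomputable def pc (x : ℝ) : ℝ := max (3 / 4) (min x (9 / 4))

lemma pc_mem (x : ℝ) : pc x ∈ Icc (3 / 4 : ℝ) (9 / 4) := by
  unfold pc
  exact ⟨le_max_left _ _, max_le (by norm_num) (min_le_right _ _)⟩

lemma pc_cont : Continuous pc := by unfold pc; fun_prop

lemma pc_eq {x : ℝ} (hx : x ∈ Icc (3 / 4 : ℝ) (9 / 4)) : pc x = x := by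
  unfold pc
  rw [min_eq_left hx.2, max_eq_right hx.1]

lemma pc_lip (x y : ℝ) : |pc x - pc y| ≤ |x - y| := by
  unfold pc
  refine (abs_max_sub_max_le_max _ _ _ _).trans ?_
  simp only [sub_self, abs_zero]
  refine max_le (abs_nonneg _) ?_
  refine (abs_min_sub_min_le_max _ _ _ _).trans ?_
  simp

lemma ext_prim {f z z' : ℝ → ℝ} (cz : Continuous z')
    (hf : ∀ x ∈ Ioo (1 / 2 : ℝ) (5 / 2), HasDerivAt f (z x) x)
    (he : ∀ x ∈ Icc (3 / 4 : ℝ) (9 / 4), z' x = z x) :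
    ∃ f' : ℝ → ℝ, (∀ x, HasDerivAt f' (z' x) x) ∧ ∀ x ∈ Icc (3 / 4 : ℝ) (9 / 4), f' x = f x := by
  refine ⟨fun x => f 1 + ∫ t in (1 : ℝ)..x, z' t, fun x => ?_, fun x hx => ?_⟩
  · exact (intervalIntegral.integral_hasDerivAt_right (cz.intervalIntegrable _ _)
      (cz.stronglyMeasurableAtFilter _ _) cz.continuousAt).const_add _
  · simp only
    rw [intervalIntegral.integral_eq_sub_of_hasDerivAt (f := f) ?_ (cz.intervalIntegrable _ _)]
    · ring
    · intro y hy
      have hy' : y ∈ Icc (3 / 4 : ℝ) (9 / 4) :=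
        (uIcc_subset_Icc (by norm_num) hx) hy
      rw [he y hy']
      exact hf y ⟨by linarith [hy'.1], by linarith [hy'.2]⟩

lemma ext_half {z h k : ℝ → ℝ} {C : ℝ} (hC : 0 < C)
    (d1 : ∀ x ∈ Ioo (1 / 2 : ℝ) (5 / 2), HasDerivAt z (h x) x)
    (d2 : ∀ x ∈ Ioo (1 / 2 : ℝ) (5 / 2), HasDerivAt h (k x) x)
    (ck : ContinuousOn k (Ioo (1 / 2 : ℝ) (5 / 2)))
    (b1 : ∀ x ∈ Ioo (1 / 2 : ℝ) (5 / 2), |h x| ≤ C)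
    (b2 : ∀ x ∈ Ioo (1 / 2 : ℝ) (5 / 2), 1 / C ≤ |h x|)
    (b3 : ∀ x ∈ Ioo (1 / 2 : ℝ) (5 / 2), |k x| ≤ C) :
    ∃ z' h' k' : ℝ → ℝ, Half z' h' k' C ∧ ∀ x ∈ Icc (3 / 4 : ℝ) (9 / 4), z' x = z x := by
  have sub : ∀ x, pc x ∈ Ioo (1 / 2 : ℝ) (5 / 2) := fun x => by
    have := pc_mem x
    exact ⟨by linarith [this.1], by linarith [this.2]⟩
  have ch : Continuous fun x => h (pc x) :=
    ContinuousOn.comp_continuous (s := Ioo (1 / 2 : ℝ) (5 / 2))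
      (fun x hx => (d2 x hx).continuousAt.continuousWithinAt) pc_cont sub
  have ck' : Continuous fun x => k (pc x) := ck.comp_continuous pc_cont sub
  obtain ⟨z', hz1, hz2⟩ := ext_prim (f := z) (z := h) ch d1 (fun x hx => by rw [pc_eq hx])
  refine ⟨z', fun x => h (pc x), fun x => k (pc x), ⟨hz1, ?_, ch, ck', ?_, fun x => b1 _ (sub x), ?_,
    fun x _ => b3 _ (sub x)⟩, hz2⟩
  · intro x hx
    have hx' : x ∈ Icc (3 / 4 : ℝ) (9 / 4) := ⟨by linarith [hx.1], by linarith [hx.2]⟩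
    have hn : Icc (3 / 4 : ℝ) (9 / 4) ∈ nhds x :=
      Icc_mem_nhds (by linarith [hx.1]) (by linarith [hx.2])
    rw [pc_eq hx']
    refine (d2 x ⟨by linarith [hx.1], by linarith [hx.2]⟩).congr_of_eventuallyEq ?_
    filter_upwards [hn] with y hy
    rw [pc_eq hy]
  · have hpos : 0 < 1 / C := by positivity
    by_cases h1 : ∃ x, h (pc x) ≤ 0
    · by_cases h2 : ∃ x, 0 ≤ h (pc x)
      · obtain ⟨x, hx⟩ := mem_range_of_exists_le_of_exists_ge ch h1 h2
        have := b2 _ (sub x)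
        simp only at hx
        rw [hx, abs_zero] at this
        linarith
      · push Not at h2
        right
        intro x
        have := b2 _ (sub x)
        rw [abs_of_neg (h2 x)] at this
        linarith
    · push Not at h1
      left
      intro x
      have := b2 _ (sub x)
      rwa [abs_of_pos (h1 x)] at this
  · intro x y
    have := Convex.norm_image_sub_le_of_norm_hasDerivWithin_le (f := h) (f' := k) (C := C)
      (s := Ioo (1 / 2 : ℝ) (5 / 2)) (fun t ht => (d2 t ht).hasDerivWithinAt)
      (fun t ht => b3 t ht) (convex_Ioo _ _) (sub y) (sub x)
    refine this.trans ?_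
    rw [Real.norm_eq_abs]
    exact mul_le_mul_of_nonneg_left (pc_lip x y) hC.le

lemma ext_sqrt {C : ℝ} (hC : 4 ≤ C) :
    ∃ S q l : ℝ → ℝ, Half S q l C ∧ ∀ x ∈ Icc (3 / 4 : ℝ) (9 / 4), S x = √x := by
  have hC0 : 0 < C := by linarith
  have hs : ∀ x ∈ Ioo (1 / 2 : ℝ) (5 / 2), 1 / 2 ≤ √x ∧ √x ≤ 2 ∧ √x ^ 2 = x ∧ √x ≠ 0 := by
    intro x hx
    have h1 : (1 / 2 : ℝ) ≤ √x := Real.le_sqrt_of_sq_le (by linarith [hx.1])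
    refine ⟨h1, Real.sqrt_le_iff.2 ⟨by norm_num, by linarith [hx.2]⟩, Real.sq_sqrt (by linarith [hx.1]), by linarith⟩
  have d1 : ∀ x ∈ Ioo (1 / 2 : ℝ) (5 / 2), HasDerivAt (fun x => √x) (1 / (2 * √x)) x :=
    fun x hx => Real.hasDerivAt_sqrt (by linarith [hx.1])
  refine ext_half (z := fun x => √x) (h := fun x => 1 / (2 * √x)) (k := fun x => -(1 / (4 * √x ^ 3))) hC0 d1 ?_ ?_ ?_ ?_ ?_
  · intro x hx
    obtain ⟨h1, h2, h3, h4⟩ := hs x hx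
    refine ((hasDerivAt_const x (1 : ℝ)).div ((d1 x hx).const_mul 2) (by simpa using h4)).congr_deriv ?_
    field_simp
    norm_num
  · refine ContinuousOn.neg (ContinuousOn.div (by fun_prop) (by fun_prop) ?_)
    intro x hx
    have := (hs x hx).2.2.2
    positivity
  · intro x hx
    obtain ⟨h1, h2, h3, h4⟩ := hs x hx
    have : 0 < √x := by linarith
    rw [abs_of_pos (by positivity), div_le_iff₀ (by positivity)]
    nlinarith
  · intro x hx
    obtain ⟨h1, h2, h3, h4⟩ := hs x hx
    have : 0 < √x := by linarith
    rw [abs_of_pos (by positivity), div_le_div_iff₀ (by positivity) (by positivity)]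
    nlinarith
  · intro x hx
    obtain ⟨h1, h2, h3, h4⟩ := hs x hx
    have : 0 < √x := by linarith
    rw [abs_neg, abs_of_pos (by positivity), div_le_iff₀ (by positivity)]
    have : (1 / 2 : ℝ) ^ 3 ≤ √x ^ 3 := by gcongr
    nlinarith

lemma ext_core {φ : ℝ → ℝ} {c' c₀ C : ℝ} (hc₀ : 0 < c₀) (hC : 4 ≤ C) (h1 : c' ≤ C) (h2 : 1 / c₀ ≤ C)
    (hφ : ContDiffOn ℝ (⊤ : ℕ∞) φ (Set.Ioo (1 / 2) (5 / 2)))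
    (hb : ∀ j : ℕ, j = 2 ∨ j = 3 → ∀ x ∈ Set.Ioo ((1 : ℝ) / 2) (5 / 2),
          |iteratedDerivWithin j φ (Set.Ioo (1 / 2) (5 / 2)) x| ≤ c')
    (hl : ∀ x ∈ Set.Ioo ((1 : ℝ) / 2) (5 / 2),
          c₀ ≤ |iteratedDerivWithin 2 φ (Set.Ioo (1 / 2) (5 / 2)) x|) :
    ∃ φ' z h k S q l : ℝ → ℝ, Core φ' z h k S q l C ∧
      (∀ x ∈ Icc (1 : ℝ) 2, φ' x = φ x) ∧ ∀ x ∈ Icc (1 : ℝ) 2, S x = √x := by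
  have hC0 : 0 < C := by linarith
  have ho : IsOpen (Ioo (1 / 2 : ℝ) (5 / 2)) := isOpen_Ioo
  have s1 := (contDiffOn_infty_iff_deriv_of_isOpen ho).1 hφ
  have s2 := (contDiffOn_infty_iff_deriv_of_isOpen ho).1 s1.2
  have s3 := (contDiffOn_infty_iff_deriv_of_isOpen ho).1 s2.2
  have D : ∀ {f : ℝ → ℝ}, DifferentiableOn ℝ f (Ioo (1 / 2 : ℝ) (5 / 2)) →
      ∀ x ∈ Ioo (1 / 2 : ℝ) (5 / 2), HasDerivAt f (deriv f x) x := fun hf x hx =>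
    (hf.differentiableAt (ho.mem_nhds hx)).hasDerivAt
  have e2 : ∀ x ∈ Ioo (1 / 2 : ℝ) (5 / 2),
      iteratedDerivWithin 2 φ (Set.Ioo (1 / 2) (5 / 2)) x = deriv (deriv φ) x := by
    intro x hx
    rw [iteratedDerivWithin_of_isOpen ho hx, iteratedDeriv_succ, iteratedDeriv_one]
  have e3 : ∀ x ∈ Ioo (1 / 2 : ℝ) (5 / 2),
      iteratedDerivWithin 3 φ (Set.Ioo (1 / 2) (5 / 2)) x = deriv (deriv (deriv φ)) x := by
    intro x hx
    rw [iteratedDerivWithin_of_isOpen ho hx, iteratedDeriv_succ, iteratedDeriv_succ, iteratedDeriv_one]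
  obtain ⟨z, h, k, HZ, hz⟩ := ext_half (C := C) hC0 (D s2.1) (D s3.1) s3.2.continuousOn
    (fun x hx => by rw [← e2 x hx]; exact (hb 2 (Or.inl rfl) x hx).trans h1)
    (fun x hx => by
      rw [← e2 x hx]; refine le_trans ?_ (hl x hx)
      rw [one_div_le hC0 hc₀]; exact h2)
    (fun x hx => by rw [← e3 x hx]; exact (hb 3 (Or.inr rfl) x hx).trans h1)
  obtain ⟨φ', p1, p2⟩ := ext_prim HZ.cz (D s1.1) hz
  obtain ⟨S, q, l, HS, hS⟩ := ext_sqrt hC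
  refine ⟨φ', z, h, k, S, q, l, ⟨by linarith, p1, HZ, HS⟩, fun x hx => p2 x ?_, fun x hx => hS x ?_⟩ <;>
  exact ⟨by linarith [hx.1], by linarith [hx.2]⟩


lemma Jcal_eq {V : ℝ → ℂ} {φ φ' S : ℝ → ℝ} {M : ℕ} (hM : 1 ≤ M) {N T K P γ X : ℝ} {p : ℕ}
    (hN : 0 < N) (hK : 0 < K) (hP : 0 < P) (hp : 0 < (p : ℝ)) (hX : X = P ^ 2 * K ^ 2 / N)
    (cV : Continuous V) (hV : Function.support V ⊆ Icc 1 2)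
    (h1 : ∀ x ∈ Icc (1 : ℝ) 2, φ' x = φ x) (h2 : ∀ x ∈ Icc (1 : ℝ) 2, S x = √x)
    (r : ℤ) {y : ℝ} (hy : 0 < y) :
    Jcal V φ M N T γ p r ((M : ℝ) * X * y) =
      Jf (P * K / p) S (fun x => V x * Eph T φ' (((r : ℝ) - γ * p) * N / p) x) (√y) := by
  unfold Jcal Jf
  have hM0 : (0 : ℝ) < M := by exact_mod_cast hM
  rw [intervalIntegral.integral_of_le (by norm_num)]
  rw [setIntegral_eq_of_subset_of_forall_sdiff_eq_zero measurableSet_Ioi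
    (s := Ioc (1 : ℝ) 2) (fun x hx => by have := hx.1; simp only [mem_Ioi]; linarith)]
  · refine setIntegral_congr_fun measurableSet_Ioc (fun x hx => ?_)
    have hx' : x ∈ Icc (1 : ℝ) 2 := ⟨hx.1.le, hx.2⟩
    simp only
    unfold Eph
    rw [mul_assoc (V x), ← e_add, h1 x hx', h2 x hx']
    congr 2
    have e1 : √(N * x * (M * X * y)) = √M * (P * K) * (√x * √y) := by
      rw [hX, show N * x * (M * (P ^ 2 * K ^ 2 / N) * y) = M * (P * K) ^ 2 * (x * y) by field_simp,
        Real.sqrt_mul (by positivity), Real.sqrt_mul (by positivity), Real.sqrt_sq (by positivity),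
        Real.sqrt_mul (by linarith [hx.1])]
    rw [e1]
    have : √(M : ℝ) ≠ 0 := (Real.sqrt_pos.2 hM0).ne'
    field_simp
    ring
  · intro x hx
    have : V x = 0 := by
      apply zero_of_supp cV hV
      by_contra hh
      push Not at hh
      exact hx.2 ⟨hh.1, hh.2.le⟩
    simp [this]

noncomputable def uu (U : ℝ → ℝ) (w : ℝ) : ℝ := 2 * w * U (w ^ 2) * Real.smoothTransition w

lemma uu_good {U : ℝ → ℝ} (hU : ContDiff ℝ (⊤ : ℕ∞) U) (hs : Function.support U ⊆ Icc 1 2) :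
    Good (uu U) := by
  constructor
  · unfold uu
    exact ((contDiff_const.mul contDiff_id).mul (hU.comp (contDiff_id.pow 2))).mul
      Real.smoothTransition.contDiff
  · intro w hw
    have hw' : 2 * w * U (w ^ 2) * Real.smoothTransition w ≠ 0 := hw
    have a1 : U (w ^ 2) ≠ 0 := fun h => hw' (by rw [h]; ring)
    have a2 : Real.smoothTransition w ≠ 0 := fun h => hw' (by rw [h]; ring)
    have a3 : 0 < w := by
      by_contra h
      push Not at h
      exact a2 (Real.smoothTransition.zero_of_nonpos h)
    have := hs a1
    constructor <;> nlinarith [this.1, this.2]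

lemma Lcal_eq {U : ℝ → ℝ} (cU : Continuous U) (hUs : Function.support U ⊆ Icc 1 2)
    {V : ℝ → ℂ} {φ φ' S : ℝ → ℝ} {M : ℕ} (hM : 1 ≤ M) {N T K P γ X : ℝ} {p : ℕ}
    (hN : 0 < N) (hK : 0 < K) (hP : 0 < P) (hp : 0 < (p : ℝ)) (hX : X = P ^ 2 * K ^ 2 / N)
    (cV : Continuous V) (hV : Function.support V ⊆ Icc 1 2) (cφ : Continuous φ') (cS : Continuous S)
    (h1 : ∀ x ∈ Icc (1 : ℝ) 2, φ' x = φ x) (h2 : ∀ x ∈ Icc (1 : ℝ) 2, S x = √x)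
    (r₁ r₂ : ℤ) :
    Lcal U V φ M N T γ X p p r₁ r₂ 0 =
      Qf (P * K / p) S (uu U) (fun x => V x * Eph T φ' (((r₁ : ℝ) - γ * p) * N / p) x)
        (fun x => V x * Eph T φ' (((r₂ : ℝ) - γ * p) * N / p) x) := by
  unfold Lcal Qf
  set P₁ : ℝ → ℂ := (fun x => V x * Eph T φ' (((r₁ : ℝ) - γ * p) * N / p) x)
  set P₂ : ℝ → ℂ := (fun x => V x * Eph T φ' (((r₂ : ℝ) - γ * p) * N / p) x)
  have cE1 := Eph_cont (T := T) cφ (((r₁ : ℝ) - γ * p) * N / p)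
  have cE2 := Eph_cont (T := T) cφ (((r₂ : ℝ) - γ * p) * N / p)
  have c1 : Continuous P₁ := by fun_prop
  have c2 : Continuous P₂ := by fun_prop
  have j1 := Jf_cont (B := P * K / p) cS c1
  have j2 := Jf_cont (B := P * K / p) cS c2
  have cc := Complex.continuous_conj
  set g : ℝ → ℂ := fun y => (U y : ℂ) * (Jf (P * K / p) S P₁ (√y) *
    (starRingEnd ℂ) (Jf (P * K / p) S P₂ (√y))) with hg
  have cg : Continuous g := by fun_prop
  have step1 : (∫ y in Ioi (0 : ℝ), (U y : ℂ) * Jcal V φ M N T γ p r₁ ((M : ℝ) * X * y) *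
      (starRingEnd ℂ) (Jcal V φ M N T γ p r₂ ((M : ℝ) * X * y)) * e (-(0 * y))) =
      ∫ y in Ioc (1 : ℝ) 4, g y := by
    rw [setIntegral_eq_of_subset_of_forall_sdiff_eq_zero measurableSet_Ioi
      (s := Ioc (1 : ℝ) 4) (fun x hx => by have := hx.1; simp only [mem_Ioi]; linarith)]
    · refine setIntegral_congr_fun measurableSet_Ioc (fun y hy => ?_)
      have hy0 : 0 < y := by linarith [hy.1]
      simp only [hg]
      rw [Jcal_eq hM hN hK hP hp hX cV hV h1 h2 r₁ hy0, Jcal_eq hM hN hK hP hp hX cV hV h1 h2 r₂ hy0,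
        zero_mul, neg_zero, e_zero, mul_one, mul_assoc]
    · intro y hy
      have : U y = 0 := by
        apply zero_of_supp cU hUs
        by_contra hh
        push Not at hh
        exact hy.2 ⟨hh.1, by linarith [hh.2]⟩
      simp [this]
  rw [step1, ← intervalIntegral.integral_of_le (by norm_num)]
  have sb := intervalIntegral.integral_deriv_smul_comp (a := 1) (b := 2) (f := fun w : ℝ => w ^ 2)
    (f' := fun w => 2 * w) (g := g) (fun x _ => by
      simpa using hasDerivAt_pow 2 x) (by fun_prop) cg
  norm_num at sb
  rw [← sb]
  refine intervalIntegral.integral_congr (fun w hw => ?_)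
  rw [uIcc_of_le (by norm_num)] at hw
  have hw0 : 0 ≤ w := by linarith [hw.1]
  simp only [hg, uu, Real.sqrt_sq hw0, Real.smoothTransition.one_of_one_le hw.1]
  push_cast
  ring

end Aux

/-- Bound for `ℒ(0)` in the case `p₁ = p₂ = p`: for `T ≥ T₀`,
`ℒ(0) ≪ 1/T`, and if moreover `r₁ ≠ r₂` then
`ℒ(0) ≪ P N^ε/(K N |r₁ − r₂|)`, with constants depending only on
`ε, M, c, c', c₀, U` and the `d_j`. -/
theorem stmt16 (ε : ℝ) (hε : 0 < ε) (M : ℕ) (hM : 1 ≤ M)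
    (c c' c₀ : ℝ) (hc : 0 < c) (hc' : 0 < c') (hc₀ : 0 < c₀) (d : ℕ → ℝ)
    (hd : ∀ j, 0 < d j)
    (U : ℝ → ℝ) (hU : ContDiff ℝ (⊤ : ℕ∞) U) (hUsupp : Function.support U ⊆ Set.Icc 1 2) :
    ∃ C T₀ : ℝ, 0 < C ∧ 0 < T₀ ∧
      ∀ (N T K P X Δ γ : ℝ) (V : ℝ → ℂ) (φ : ℝ → ℝ) (p : ℕ) (r₁ r₂ : ℤ),
        1 < N → 1 < T → 1 < K → 1 < P → T₀ ≤ T →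
        N ^ ε < K → K ≤ c' * T → N ^ (1 + ε) < P * K → X = P ^ 2 * K ^ 2 / N →
        ContDiff ℝ (⊤ : ℕ∞) V → Function.support V ⊆ Set.Icc 1 2 →
        1 ≤ Δ → Δ ≤ T * N ^ (-ε) →
        (∀ j : ℕ, ∀ x : ℝ, ‖iteratedDeriv j V x‖ ≤ d j * Δ ^ j) →
        (∫ x in (1 / 2 : ℝ)..(5 / 2), ‖deriv V x‖) ≤ 1 →
        ContDiffOn ℝ (⊤ : ℕ∞) φ (Set.Ioo (1 / 2) (5 / 2)) →
        (∀ j : ℕ, j = 2 ∨ j = 3 → ∀ x ∈ Set.Ioo ((1 : ℝ) / 2) (5 / 2),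
          |iteratedDerivWithin j φ (Set.Ioo (1 / 2) (5 / 2)) x| ≤ c') →
        (∀ x ∈ Set.Ioo ((1 : ℝ) / 2) (5 / 2),
          c₀ ≤ |iteratedDerivWithin 2 φ (Set.Ioo (1 / 2) (5 / 2)) x|) →
        Nat.Prime p → P ≤ (p : ℝ) → (p : ℝ) ≤ 2 * P →
        |(r₁ : ℝ) - γ * p| ≤ c * P * T / N →
        |(r₂ : ℝ) - γ * p| ≤ c * P * T / N →
        ‖Lcal U V φ M N T γ X p p r₁ r₂ 0‖ ≤ C / T ∧
        (r₁ ≠ r₂ →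
          ‖Lcal U V φ M N T γ X p p r₁ r₂ 0‖ ≤
            C * P * N ^ ε / (K * N * |(r₁ : ℝ) - (r₂ : ℝ)|)) := by
  have gu := uu_good hU hUsupp
  obtain ⟨k1, hk1, u1⟩ := gu.exists_UB
  obtain ⟨k2, hk2, u2⟩ := gu.deriv.exists_UB
  obtain ⟨k3, hk3, u3⟩ := gu.mulid.exists_UB
  obtain ⟨R, hR⟩ : ∃ R, R = 4 + c' + 1 / c₀ + d 0 + k1 + k2 + k3 := ⟨_, rfl⟩
  have hd0 := hd 0
  have hc1 : 0 < 1 / c₀ := by positivity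
  have hR4 : 4 ≤ R := by linarith
  have hR0 : 0 < R := by linarith
  refine ⟨120000 * R ^ 15, 1, by positivity, one_pos, ?_⟩
  intro N T K P X Δ γ V φ p r₁ r₂ hN hT hK hP _ _ _ _ hX hV hVs _ _ hVb hVv hφ hb hl hp hp1 hp2 _ _
  have hN0 : 0 < N := by linarith
  have hT0 : 0 < T := by linarith
  have hK0 : 0 < K := by linarith
  have hP0 : 0 < P := by linarith
  have hp0 : 0 < (p : ℝ) := by linarith
  obtain ⟨φ', z, h, k, S, q, l, HC, e1, e2⟩ := ext_core hc₀ hR4 (by linarith) (by linarith) hφ hb hl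
  have cV := hV.continuous
  have cV' : Continuous (deriv V) := hV.continuous_deriv (by simp)
  have hA : Amp V (deriv V) R := by
    refine ⟨cV, cV', fun x _ => (hV.differentiable (by simp) x).hasDerivAt,
      zero_of_supp cV hVs (Or.inl le_rfl), zero_of_supp cV hVs (Or.inr le_rfl), fun x _ => ?_, ?_⟩
    · have := hVb 0 x
      simp only [iteratedDeriv_zero, pow_zero, mul_one] at this
      linarith
    · have : (∫ x in (1 : ℝ)..2, ‖deriv V x‖) ≤ ∫ x in (1 / 2 : ℝ)..(5 / 2), ‖deriv V x‖ := by
        apply intervalIntegral.integral_mono_interval (by norm_num) (by norm_num) (by norm_num)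
        · exact Filter.Eventually.of_forall fun x => norm_nonneg _
        · exact cV'.norm.intervalIntegrable _ _
      linarith
  have G : Dat φ' z h k S q l (uu U) V (deriv V) R :=
    ⟨HC, u1 R (by linarith), u2 R (by linarith), u3 R (by linarith), hA⟩
  have hB : 0 < P * K / p := by positivity
  rw [Lcal_eq (φ' := φ') (S := S) hU.continuous hUsupp hM hN0 hK0 hP0 hp0 hX cV hVs HC.cφ HC.HS.cz e1 e2 r₁ r₂]
  obtain ⟨b1, b2⟩ := core G hT.le hB (((r₁ : ℝ) - γ * p) * N / p) (((r₂ : ℝ) - γ * p) * N / p)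
  set Q := ‖Qf (P * K / p) S (uu U) (fun x => V x * Eph T φ' (((r₁ : ℝ) - γ * p) * N / p) x)
        (fun x => V x * Eph T φ' (((r₂ : ℝ) - γ * p) * N / p) x)‖
  refine ⟨b1.trans ?_, fun hne => ?_⟩
  · gcongr; norm_num
  · have hr : 0 < |(r₁ : ℝ) - r₂| := by
      rw [abs_pos, sub_ne_zero]; exact_mod_cast hne
    rw [show ((r₁ : ℝ) - γ * p) * N / p - ((r₂ : ℝ) - γ * p) * N / p = (r₁ - r₂) * (N / p) by ring,
      abs_mul, abs_of_pos (a := N / p) (by positivity), ← le_div_iff₀' (by positivity)] at b2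
    have hNe : 1 ≤ N ^ ε := Real.one_le_rpow hN.le hε.le
    calc Q ≤ _ := b2
      _ = 30000 * R ^ 15 * p ^ 2 / (P * K * N * |(r₁ : ℝ) - r₂|) := by
        field_simp
      _ ≤ 30000 * R ^ 15 * (2 * P) ^ 2 / (P * K * N * |(r₁ : ℝ) - r₂|) := by gcongr
      _ = 120000 * R ^ 15 * P * 1 / (K * N * |(r₁ : ℝ) - r₂|) := by field_simp; ring
      _ ≤ _ := by gcongr
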